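/- Let P_1,...,P_s be distinct points in P^n with s ≤ 5, let m be a positive integer, and Z = mP_1 + ... + mP_s. Then reg(Z) = max{T_j : j = 1,...,n}, where T_j = max{⌊(qm + j - 2)/j⌋ : some q of the points lie on a j-dimensional linear subspace}. -/

import Mathlib

open MvPolynomial

noncomputable section

/-- The defining prime ideal of the point of projective space with homogeneous
coordinates `p`: the ideal generated by the linear forms vanishing at `p`. -/
def pointIdeal {K : Type} [Field K] {N : ℕ} (p : Fin N → K) :
    Ideal (MvPolynomial (Fin N) K) :=
  Ideal.span {f | f.IsHomogeneous 1 ∧ eval p f = 0}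

/-- The ideal of the fat point scheme `m₁P₁ + ⋯ + m_sP_s`. -/
def fatIdeal {K : Type} [Field K] {N s : ℕ} (p : Fin s → Fin N → K) (m : Fin s → ℕ) :
    Ideal (MvPolynomial (Fin N) K) :=
  ⨅ i, pointIdeal (p i) ^ (m i)

/-- `dim_K` of the degree-`t` graded piece of the ideal `I`. -/
def gradedDim (K : Type) [Field K] {N : ℕ} (I : Ideal (MvPolynomial (Fin N) K)) (t : ℕ) : ℕ :=
  Module.finrank K ↥(homogeneousSubmodule (Fin N) K t ⊓ I.restrictScalars K)

/-- The Hilbert function of `R/I` in degree `t`. -/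
def hilbFn (K : Type) [Field K] {N : ℕ} (I : Ideal (MvPolynomial (Fin N) K)) (t : ℕ) : ℕ :=
  Module.finrank K ↥(homogeneousSubmodule (Fin N) K t) - gradedDim K I t

/-- The regularity index of `R/I` relative to the multiplicity `e`:
the least `t` with `H_{R/I}(t) = e`. -/
def regIndex (K : Type) [Field K] {N : ℕ} (I : Ideal (MvPolynomial (Fin N) K)) (e : ℕ) : ℕ :=
  sInf {t | hilbFn K I t = e}

/-- The multiplicity `e(R/I) = ∑ C(mᵢ+n-1, n)` of a fat point scheme in `ℙⁿ`. -/
def fatMult (n : ℕ) {s : ℕ} (m : Fin s → ℕ) : ℕ :=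
  ∑ i, (m i + n - 1).choose n

/-- The regularity index of the fat point scheme `m₁P₁ + ⋯ + m_sP_s` in `ℙⁿ`. -/
def regFat (K : Type) [Field K] {n s : ℕ} (p : Fin s → Fin (n + 1) → K) (m : Fin s → ℕ) : ℕ :=
  regIndex K (fatIdeal p m) (fatMult n m)

/-- The coordinate vectors `p i` represent distinct points of projective space. -/
def ProjDistinct {K : Type} [Field K] {N s : ℕ} (p : Fin s → Fin N → K) : Prop :=
  (∀ i, p i ≠ 0) ∧ ∀ i j, i ≠ j → ∀ c : K, p i ≠ c • p j

/-- The points `p i`, `i ∈ Q`, lie on a `j`-dimensional linear subspace of `ℙⁿ`. -/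
def OnLinearSubspace {K : Type} [Field K] {N s : ℕ} (p : Fin s → Fin N → K)
    (Q : Finset (Fin s)) (j : ℕ) : Prop :=
  ∃ W : Submodule K (Fin N → K), Module.finrank K ↥W ≤ j + 1 ∧ ∀ i ∈ Q, p i ∈ W

open Classical in
/-- The Segre bound `T(Z) = max {T_j(Z) | j = 1,…,n}` for fat points in `ℙⁿ`. -/
def segreBound {K : Type} [Field K] (n : ℕ) {s : ℕ} (p : Fin s → Fin (n + 1) → K)
    (m : Fin s → ℕ) : ℕ :=
  (Finset.Icc 1 n).sup fun j =>
    Finset.univ.powerset.sup fun Q =>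
      if Q.Nonempty ∧ OnLinearSubspace p Q j then (∑ i ∈ Q, m i + j - 2) / j else 0

/-- The standard coordinate point `(1,0,…,0)`. -/
def stdPt (K : Type) [Field K] (N : ℕ) : Fin N → K := fun j => if (j : ℕ) = 0 then 1 else 0

/-!
The Hilbert function of `R/I` reaches the multiplicity in degree `t` exactly when `m ≤ t + 1` and,
for every `i`, each form of degree `t` is congruent modulo `℘ᵢ^m` to a form lying in all the other
`℘ⱼ^m`.

*The regularity index is at least the Segre bound.* Through `q` points spanning a `j`-dimensional
space in general position, `q ≤ j + 3`, passes a rational curve of degree `j`. Choose a form of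
degree `t` with a zero of order exactly `m - 1` at one of the points along the curve and
correct it modulo `℘ᵢ^m` so that it vanishes to order `m` at the others: on the curve it has at
least `q m - 1` zeros but is nonzero of degree at most `j t`, whence `q m ≤ j t + 1`. For `q ≤ 5`,
points that are not in general position are handled by a smaller subspace.

*The regularity index is at most the Segre bound.* It suffices to multiply every product `π` of
`k < m` linear forms through `Pᵢ`, taken from a spanning set, by `t - k` linear forms not
vanishing at `Pᵢ` so that the result lies in all the other `℘ⱼ^m`. Let `g + 1` be the least number
of the other points whose span contains `Pᵢ`. The forms in `π` may be chosen to vanish at `g - 1` of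
these points each, and every further form can be made to vanish at any `g` of the other points in
the span, and at one more point outside it. By the Segre bound for the span there are enough
factors, and distributing the missing zeros over them is a scheduling problem.
-/

/-! ### Linear forms -/

section LinearForms

theorem exists_eq_sum_C_mul_X {R σ : Type*} [CommSemiring R] [Fintype σ] {f : MvPolynomial σ R}
    (hf : f.IsHomogeneous 1) : ∃ c : σ → R, f = ∑ j, C (c j) * X j := by
  rw [← mem_homogeneousSubmodule, homogeneousSubmodule_one_eq_span_X,
    Submodule.mem_span_range_iff_exists_fun] at hf
  obtain ⟨c, rfl⟩ := hf
  exact ⟨c, by simp only [smul_eq_C_mul]⟩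

theorem exists_isHomogeneous_one_eval_eq {R σ : Type*} [CommSemiring R] [Finite σ]
    (φ : Module.Dual R (σ → R)) :
    ∃ f : MvPolynomial σ R, f.IsHomogeneous 1 ∧ ∀ x, eval x f = φ x := by
  classical
  have := Fintype.ofFinite σ
  refine ⟨∑ j, C (φ fun k => if j = k then 1 else 0) * X j,
    IsHomogeneous.sum _ _ _ fun j _ => isHomogeneous_C_mul_X _ _, fun x => ?_⟩
  rw [LinearMap.pi_apply_eq_sum_univ φ x]
  simp [mul_comm]

theorem natDegree_algHom_le {R A σ : Type*} [CommRing R] [CommRing A] [Algebra R A]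
    (Φ : MvPolynomial σ R →ₐ[R] Polynomial A) {d t : ℕ} (hΦ : ∀ j, (Φ (X j)).natDegree ≤ d)
    {f : MvPolynomial σ R} (hf : f.IsHomogeneous t) : (Φ f).natDegree ≤ t * d := by
  rw [aeval_unique Φ, ← aeval_map_algebraMap A]
  exact aeval_natDegree_le _ (hf.map _).totalDegree_le _ hΦ

variable {K : Type} [Field K] {N : ℕ}

theorem exists_linearForm_of_notMem {W : Submodule K (Fin N → K)} {x : Fin N → K} (hx : x ∉ W) :
    ∃ f : MvPolynomial (Fin N) K, f.IsHomogeneous 1 ∧ eval x f = 1 ∧ ∀ w ∈ W, eval w f = 0 := by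
  obtain ⟨φ, hφx, hφW⟩ := Submodule.exists_le_ker_of_notMem hx
  obtain ⟨f, hf, hfφ⟩ := exists_isHomogeneous_one_eval_eq ((φ x)⁻¹ • φ)
  refine ⟨f, hf, by simp [hfφ, hφx], fun w hw => ?_⟩
  rw [hfφ, LinearMap.smul_apply, LinearMap.mem_ker.1 (hφW hw), smul_zero]

theorem exists_linearForm_eval_eq_one {P : Fin N → K} (hP : P ≠ 0) :
    ∃ h : MvPolynomial (Fin N) K, h.IsHomogeneous 1 ∧ eval P h = 1 := by
  obtain ⟨h, hh, hhP, -⟩ := exists_linearForm_of_notMem ((Submodule.mem_bot K).not.2 hP)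
  exact ⟨h, hh, hhP⟩

/-- The space of linear forms vanishing at `P`, i.e. the degree-one part of `pointIdeal P`. -/
def linearFormsVanishing (P : Fin N → K) : Submodule K (MvPolynomial (Fin N) K) where
  carrier := {f | f.IsHomogeneous 1 ∧ eval P f = 0}
  add_mem' hf hg := ⟨hf.1.add hg.1, by rw [map_add, hf.2, hg.2, add_zero]⟩
  zero_mem' := ⟨isHomogeneous_zero _ _ _, map_zero _⟩
  smul_mem' c _ hf := ⟨(homogeneousSubmodule _ _ 1).smul_mem c hf.1, by
    rw [smul_eval, hf.2, mul_zero]⟩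

theorem mem_linearFormsVanishing {P : Fin N → K} {f : MvPolynomial (Fin N) K} :
    f ∈ linearFormsVanishing P ↔ f.IsHomogeneous 1 ∧ eval P f = 0 :=
  Iff.rfl

theorem linearFormsVanishing_pow_mul_le (P : Fin N → K) (m : ℕ)
    (V : Submodule K (MvPolynomial (Fin N) K)) :
    linearFormsVanishing P ^ m * V ≤ (pointIdeal P ^ m).restrictScalars K := by
  have hpow : linearFormsVanishing P ^ m ≤ (pointIdeal P ^ m).restrictScalars K := by
    induction m with
    | zero => simp
    | succ m ih =>
      rw [pow_succ, Submodule.mul_le]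
      intro a ha b hb
      rw [Submodule.restrictScalars_mem, pow_succ]
      exact Ideal.mul_mem_mul (ih ha) (Ideal.subset_span (mem_linearFormsVanishing.1 hb))
  exact Submodule.mul_le.2 fun a ha b _ => Ideal.mul_mem_right _ _ (hpow ha)

section AlgHom

variable {A : Type*} [CommRing A] [Algebra K A] (Φ : MvPolynomial (Fin N) K →ₐ[K] A)
  {J : Ideal A} {u : A} {P : Fin N → K} (hΦ : ∀ j, Φ (X j) - u * algebraMap K A (P j) ∈ J)
  {f : MvPolynomial (Fin N) K}

include hΦ

theorem algHom_linearForm_sub_mem (hf : f.IsHomogeneous 1) :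
    Φ f - u * algebraMap K A (eval P f) ∈ J := by
  obtain ⟨c, rfl⟩ := exists_eq_sum_C_mul_X hf
  have hsum : Φ (∑ j, C (c j) * X j) - u * algebraMap K A (eval P (∑ j, C (c j) * X j)) =
      ∑ j, algebraMap K A (c j) * (Φ (X j) - u * algebraMap K A (P j)) := by
    simp only [map_sum, map_mul, eval_C, eval_X, Finset.mul_sum, ← Finset.sum_sub_distrib,
      algHom_C]
    exact Finset.sum_congr rfl fun j _ => by ring
  rw [hsum]
  exact Ideal.sum_mem _ fun j _ => Ideal.mul_mem_left _ _ (hΦ j)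

theorem algHom_mem_pow_of_mem_pointIdeal_pow {m : ℕ} (hf : f ∈ pointIdeal P ^ m) :
    Φ f ∈ J ^ m := by
  have hle : pointIdeal P ≤ J.comap Φ := by
    refine Ideal.span_le.2 fun g hg => ?_
    simpa [hg.2] using algHom_linearForm_sub_mem Φ hΦ hg.1
  exact ((Ideal.pow_right_mono hle m).trans (Ideal.le_comap_pow Φ m)) hf

end AlgHom

theorem eval_eq_zero_of_mem_pointIdeal_pow {P : Fin N → K} {m : ℕ} (hm : m ≠ 0)
    {f : MvPolynomial (Fin N) K} (hf : f ∈ pointIdeal P ^ m) : eval P f = 0 := by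
  have hP := algHom_mem_pow_of_mem_pointIdeal_pow (aeval P) (J := ⊥) (u := 1) (by simp) hf
  rwa [← Ideal.zero_eq_bot, zero_pow hm, Ideal.zero_eq_bot, Ideal.mem_bot] at hP

end LinearForms

/-! ### Graded pieces at a point -/

section GradedPieces

variable {K : Type} [Field K] {N : ℕ} {P : Fin N → K} {h : MvPolynomial (Fin N) K}

local notation "𝓡" => homogeneousSubmodule (Fin N) K

theorem homogeneousSubmodule_mul_homogeneousSubmodule {R σ : Type*} [CommSemiring R] (a b : ℕ) :
    homogeneousSubmodule σ R a * homogeneousSubmodule σ R b = homogeneousSubmodule σ R (a + b) := by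
  rw [← homogeneousSubmodule_one_pow _ a, ← homogeneousSubmodule_one_pow _ b, ← pow_add,
    homogeneousSubmodule_one_pow]

section Generators

variable (hh : h.IsHomogeneous 1) (hhP : eval P h = 1)

include hh hhP

theorem homogeneousSubmodule_one_eq_span_sup :
    𝓡 1 = Submodule.span K {h} ⊔ linearFormsVanishing P := by
  refine le_antisymm (fun f hf => ?_) (sup_le ?_ fun f hf => hf.1)
  · refine Submodule.mem_sup.2 ⟨eval P f • h, Submodule.smul_mem _ _
      (Submodule.mem_span_singleton_self _), f - eval P f • h, ⟨?_, by simp [hhP]⟩, by ring⟩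
    exact (𝓡 1).sub_mem hf ((𝓡 1).smul_mem _ hh)
  · exact (Submodule.span_singleton_le_iff_mem _ _).2 hh

theorem homogeneousSubmodule_succ_le_span_pow_sup (d : ℕ) :
    𝓡 (d + 1) ≤ Submodule.span K {h ^ (d + 1)} ⊔ linearFormsVanishing P * 𝓡 d := by
  induction d with
  | zero =>
    rw [homogeneousSubmodule_one_eq_span_sup hh hhP, homogeneousSubmodule_zero, mul_one, zero_add,
      pow_one]
  | succ d ih =>
    have hpow : 𝓡 1 * Submodule.span K {h ^ (d + 1)} ≤
        Submodule.span K {h ^ (d + 2)} ⊔ linearFormsVanishing P * 𝓡 (d + 1) := by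
      rw [homogeneousSubmodule_one_eq_span_sup hh hhP, Submodule.sup_mul, Submodule.span_mul_span,
        Set.singleton_mul_singleton, ← pow_succ']
      refine sup_le_sup le_rfl (mul_le_mul' le_rfl ((Submodule.span_singleton_le_iff_mem _ _).2 ?_))
      simpa using hh.pow (d + 1)
    calc 𝓡 (d + 2) = 𝓡 1 * 𝓡 (d + 1) := by
          rw [homogeneousSubmodule_mul_homogeneousSubmodule, add_comm 1]
      _ ≤ 𝓡 1 * Submodule.span K {h ^ (d + 1)} ⊔ 𝓡 1 * (linearFormsVanishing P * 𝓡 d) := by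
          rw [← Submodule.mul_sup]
          exact mul_le_mul' le_rfl ih
      _ ≤ _ := by
          rw [mul_left_comm, homogeneousSubmodule_mul_homogeneousSubmodule, add_comm 1 d]
          exact sup_le hpow le_sup_right

theorem homogeneousSubmodule_succ_le_mul_sup_pow (m : ℕ) :
    𝓡 (m + 1) ≤ Submodule.span K {h} * 𝓡 m ⊔ linearFormsVanishing P ^ (m + 1) := by
  induction m with
  | zero =>
    rw [homogeneousSubmodule_one_eq_span_sup hh hhP, homogeneousSubmodule_zero, mul_one, zero_add,
      pow_one]
  | succ m ih =>
    have hmul : linearFormsVanishing P * 𝓡 m ≤ 𝓡 (m + 1) := by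
      rw [add_comm, ← homogeneousSubmodule_mul_homogeneousSubmodule]
      exact mul_le_mul' (fun f hf => hf.1) le_rfl
    calc 𝓡 (m + 2) = 𝓡 1 * 𝓡 (m + 1) := by
          rw [homogeneousSubmodule_mul_homogeneousSubmodule, add_comm 1]
      _ = Submodule.span K {h} * 𝓡 (m + 1) ⊔ linearFormsVanishing P * 𝓡 (m + 1) := by
          rw [homogeneousSubmodule_one_eq_span_sup hh hhP, Submodule.sup_mul]
      _ ≤ Submodule.span K {h} * 𝓡 (m + 1) ⊔ linearFormsVanishing P *
            (Submodule.span K {h} * 𝓡 m ⊔ linearFormsVanishing P ^ (m + 1)) :=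
          sup_le_sup le_rfl (mul_le_mul' le_rfl ih)
      _ ≤ _ := by
          rw [Submodule.mul_sup, ← pow_succ', mul_left_comm, ← sup_assoc]
          exact sup_le_sup (sup_le le_rfl (mul_le_mul' le_rfl hmul)) le_rfl

theorem exists_sub_pow_mul_mem (m a : ℕ) {f : MvPolynomial (Fin N) K} (hf : f ∈ 𝓡 (m + a)) :
    ∃ g ∈ 𝓡 m, f - h ^ a * g ∈ pointIdeal P ^ (m + 1) := by
  induction a generalizing f with
  | zero => exact ⟨f, hf, by simp⟩
  | succ a ih =>
    have hle : 𝓡 (m + (a + 1)) ≤ Submodule.span K {h} * 𝓡 (m + a) ⊔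
        (pointIdeal P ^ (m + 1)).restrictScalars K := by
      rw [show m + (a + 1) = m + 1 + a by ring, ← homogeneousSubmodule_mul_homogeneousSubmodule]
      refine (mul_le_mul' (homogeneousSubmodule_succ_le_mul_sup_pow hh hhP m) le_rfl).trans ?_
      rw [Submodule.sup_mul, mul_assoc, homogeneousSubmodule_mul_homogeneousSubmodule]
      exact sup_le_sup le_rfl (linearFormsVanishing_pow_mul_le _ _ _)
    obtain ⟨y, hy, z, hz, rfl⟩ := Submodule.mem_sup.1 (hle hf)
    obtain ⟨w, hw, rfl⟩ := Submodule.mem_span_singleton_mul.1 hy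
    obtain ⟨g, hg, hgw⟩ := ih hw
    refine ⟨g, hg, ?_⟩
    rw [show h * w + z - h ^ (a + 1) * g = h * (w - h ^ a * g) + z by ring]
    exact Ideal.add_mem _ (Ideal.mul_mem_left _ _ hgw) hz

end Generators

theorem mem_linearFormsVanishing_mul (hP : P ≠ 0) {d : ℕ} {f : MvPolynomial (Fin N) K}
    (hf : f ∈ 𝓡 d) (hfP : eval P f = 0) : f ∈ linearFormsVanishing P * 𝓡 (d - 1) := by
  cases d with
  | zero =>
    rw [homogeneousSubmodule_zero, Submodule.mem_one] at hf
    obtain ⟨c, rfl⟩ := hf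
    rw [algebraMap_eq, eval_C] at hfP
    simp [hfP]
  | succ d =>
    obtain ⟨h, hh, hhP⟩ := exists_linearForm_eval_eq_one hP
    obtain ⟨y, hy, z, hz, rfl⟩ :=
      Submodule.mem_sup.1 (homogeneousSubmodule_succ_le_span_pow_sup hh hhP d hf)
    obtain ⟨c, rfl⟩ := Submodule.mem_span_singleton.1 hy
    have hzP : eval P z = 0 := by
      have hker : linearFormsVanishing P * 𝓡 d ≤
          LinearMap.ker (aeval P : MvPolynomial (Fin N) K →ₐ[K] K).toLinearMap :=
        Submodule.mul_le.2 fun a ha b _ => by simp [aeval_eq_eval, ha.2]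
      simpa [aeval_eq_eval] using hker hz
    have hc : c = 0 := by simpa [hhP, hzP] using hfP
    simpa [hc] using hz

/-- The Taylor expansion `f ↦ f(P + ε X)` at `P`, as a polynomial in `ε`. -/
def taylorAt (P : Fin N → K) :
    MvPolynomial (Fin N) K →ₐ[K] Polynomial (MvPolynomial (Fin N) K) :=
  aeval fun j => Polynomial.C (C (P j)) + Polynomial.X * Polynomial.C (X j)

theorem taylorAt_X_sub_mem (P : Fin N → K) (j : Fin N) :
    taylorAt P (X j) - 1 * algebraMap K _ (P j) ∈
      Ideal.span {(Polynomial.X : Polynomial (MvPolynomial (Fin N) K))} := by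
  rw [taylorAt, aeval_X, Ideal.mem_span_singleton, one_mul, IsScalarTower.algebraMap_apply K
    (MvPolynomial (Fin N) K), ← Polynomial.C_eq_algebraMap, algebraMap_eq, add_sub_cancel_left]
  exact dvd_mul_right _ _

theorem taylorAt_injective (P : Fin N → K) : Function.Injective (taylorAt P) := by
  let evalOne : Polynomial (MvPolynomial (Fin N) K) →ₐ[K] MvPolynomial (Fin N) K :=
    (Polynomial.aeval (1 : MvPolynomial (Fin N) K)).restrictScalars K
  let translate : MvPolynomial (Fin N) K →ₐ[K] MvPolynomial (Fin N) K :=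
    aeval fun j => X j - C (P j)
  have hinv : translate.comp (evalOne.comp (taylorAt P)) = AlgHom.id K _ := by
    ext j
    simp [translate, evalOne, taylorAt]
  exact Function.LeftInverse.injective (g := fun F => translate (evalOne F)) (AlgHom.congr_fun hinv)

theorem natDegree_taylorAt_le {d : ℕ} {f : MvPolynomial (Fin N) K} (hf : f.IsHomogeneous d) :
    (taylorAt P f).natDegree ≤ d := by
  refine (natDegree_algHom_le (taylorAt P) (d := 1) (fun j => ?_) hf).trans (mul_one d).le
  rw [taylorAt, aeval_X]
  compute_degree

theorem eq_zero_of_pow_mul_mem_pointIdeal_pow (hh : h.IsHomogeneous 1) (hhP : eval P h = 1)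
    {m a : ℕ} {f : MvPolynomial (Fin N) K} (hf : f ∈ 𝓡 m)
    (hfm : h ^ a * f ∈ pointIdeal P ^ (m + 1)) : f = 0 := by
  have hdvd : Polynomial.X ^ (m + 1) ∣ taylorAt P h ^ a * taylorAt P f := by
    have := algHom_mem_pow_of_mem_pointIdeal_pow (taylorAt P) (taylorAt_X_sub_mem P) hfm
    rwa [Ideal.span_singleton_pow, Ideal.mem_span_singleton, map_mul, map_pow] at this
  have hcop : IsCoprime Polynomial.X (taylorAt P h) := by
    have := algHom_linearForm_sub_mem (taylorAt P) (taylorAt_X_sub_mem P) hh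
    rw [hhP, Ideal.mem_span_singleton, map_one, mul_one] at this
    obtain ⟨q, hq⟩ := this
    exact ⟨-q, 1, by linear_combination hq⟩
  refine taylorAt_injective P ((Polynomial.eq_zero_of_dvd_of_natDegree_lt
    (hcop.pow.dvd_of_dvd_mul_left hdvd) ?_).trans (map_zero _).symm)
  rw [Polynomial.natDegree_X_pow]
  exact Nat.lt_succ_of_le (natDegree_taylorAt_le hf)

instance finiteDimensional_homogeneousSubmodule (t : ℕ) : FiniteDimensional K (𝓡 t) :=
  Module.Finite.iff_fg.2 (homogeneousSubmodule_fg _ _ t)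

theorem finrank_homogeneousSubmodule (K : Type*) [Field K] (n t : ℕ) :
    Module.finrank K (homogeneousSubmodule (Fin (n + 1)) K t) = (t + n).choose n := by
  have hdeg : {d : Fin (n + 1) →₀ ℕ | d.degree = t} =
      (Finset.univ.finsuppAntidiag t : Finset (Fin (n + 1) →₀ ℕ)) := by
    ext d
    simp [Finset.mem_finsuppAntidiag, Finsupp.degree_eq_sum]
  rw [homogeneousSubmodule_eq_finsupp_supported]
  refine (Module.finrank_eq_nat_card_basis (basisRestrictSupport K _)).trans ?_
  rw [hdeg, Nat.card_coe_set_eq, Set.ncard_coe_finset, Finset.card_finsuppAntidiag_nat_eq_choose,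
    Finset.card_univ, Fintype.card_fin, show n + 1 + t - 1 = t + n by omega]
  exact Nat.choose_symm_add

/-- The degree-`t` part of the `m`-th power of the ideal of `P`, inside the forms of degree `t`. -/
def pointIdealPowDegree (P : Fin N → K) (m t : ℕ) : Submodule K (𝓡 t) :=
  ((pointIdeal P ^ m).restrictScalars K).comap (𝓡 t).subtype

theorem finrank_quotient_eq_of_bijective_mod {R A B : Type*} [Ring R] [AddCommGroup A] [Module R A]
    [AddCommGroup B] [Module R B] {U : Submodule R A} (μ : B →ₗ[R] A)
    (hinj : ∀ b, μ b ∈ U → b = 0) (hsurj : ∀ a, ∃ b, a - μ b ∈ U) :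
    Module.finrank R (A ⧸ U) = Module.finrank R B := by
  refine (LinearEquiv.ofBijective (U.mkQ ∘ₗ μ) ⟨(injective_iff_map_eq_zero _).2 fun b hb =>
    hinj b ((Submodule.Quotient.mk_eq_zero U).1 hb), fun q => ?_⟩).finrank_eq.symm
  obtain ⟨a, rfl⟩ := U.mkQ_surjective q
  obtain ⟨b, hb⟩ := hsurj a
  exact ⟨b, ((Submodule.Quotient.eq U).2 hb).symm⟩

theorem finrank_quotient_pointIdealPowDegree_succ (hP : P ≠ 0) (m a : ℕ) :
    Module.finrank K (𝓡 (m + a) ⧸ pointIdealPowDegree P (m + 1) (m + a)) =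
      Module.finrank K (𝓡 m) := by
  obtain ⟨h, hh, hhP⟩ := exists_linearForm_eval_eq_one hP
  have hmul : ∀ f : 𝓡 m, h ^ a * f ∈ 𝓡 (m + a) := fun f => by
    simpa [add_comm a] using (hh.pow a).mul f.2
  refine finrank_quotient_eq_of_bijective_mod
    (((LinearMap.mulLeft K (h ^ a)).domRestrict (𝓡 m)).codRestrict _ hmul) (fun f hf => ?_)
    fun f => ?_
  · exact Subtype.ext (eq_zero_of_pow_mul_mem_pointIdeal_pow hh hhP f.2 hf)
  · obtain ⟨g, hg, hfg⟩ := exists_sub_pow_mul_mem hh hhP m a f.2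
    exact ⟨⟨g, hg⟩, hfg⟩

theorem finrank_quotient_pointIdealPowDegree {n m t : ℕ} (hn : 0 < n) {P : Fin (n + 1) → K}
    (hP : P ≠ 0) (hm : m ≤ t + 1) :
    Module.finrank K (homogeneousSubmodule (Fin (n + 1)) K t ⧸ pointIdealPowDegree P m t) =
      (m + n - 1).choose n := by
  cases m with
  | zero =>
    have htop : pointIdealPowDegree P 0 t = ⊤ := by
      simp [pointIdealPowDegree]
    rw [htop, Nat.choose_eq_zero_of_lt (by omega)]
    exact Module.finrank_zero_of_subsingleton
  | succ m =>
    obtain ⟨a, rfl⟩ := Nat.exists_eq_add_of_le (Nat.le_of_succ_le_succ hm)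
    rw [finrank_quotient_pointIdealPowDegree_succ hP, finrank_homogeneousSubmodule]
    congr 1
    omega

theorem finrank_quotient_pointIdealPowDegree_lt {n m t : ℕ} (hn : 0 < n) (P : Fin (n + 1) → K)
    (hm : t + 1 < m) :
    Module.finrank K (homogeneousSubmodule (Fin (n + 1)) K t ⧸ pointIdealPowDegree P m t) <
      (m + n - 1).choose n := by
  obtain ⟨k, rfl⟩ := Nat.exists_eq_add_one_of_ne_zero hn.ne'
  calc _ ≤ (t + (k + 1)).choose (k + 1) :=
        (Submodule.finrank_quotient_le _).trans (finrank_homogeneousSubmodule K _ t).le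
    _ < (t + (k + 1) + 1).choose (k + 1) := by
        rw [Nat.choose_succ_succ]
        exact Nat.lt_add_of_pos_left (Nat.choose_pos (by omega))
    _ ≤ (m + (k + 1) - 1).choose (k + 1) := Nat.choose_le_choose _ (by omega)

end GradedPieces

/-! ### The Hilbert function of fat points -/

section Separation

theorem finrank_quotient_iInf_eq_sum_iff {R V ι : Type*} [DivisionRing R] [AddCommGroup V]
    [Module R V] [FiniteDimensional R V] [Fintype ι] (U : ι → Submodule R V) {e : ι → ℕ}
    (he : ∀ i, Module.finrank R (V ⧸ U i) ≤ e i) :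
    Module.finrank R (V ⧸ ⨅ i, U i) = ∑ i, e i ↔
      (∀ i, Module.finrank R (V ⧸ U i) = e i) ∧
        Function.Surjective (LinearMap.pi fun i => (U i).mkQ) := by
  set Φ := LinearMap.pi fun i => (U i).mkQ
  have hker : LinearMap.ker Φ = ⨅ i, U i := by simp [Φ, LinearMap.ker_pi]
  have hrange : Module.finrank R (V ⧸ ⨅ i, U i) = Module.finrank R (LinearMap.range Φ) := by
    rw [← hker]
    exact Φ.quotKerEquivRange.finrank_eq
  have hpi : Module.finrank R (∀ i, V ⧸ U i) = ∑ i, Module.finrank R (V ⧸ U i) :=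
    Module.finrank_pi_fintype R
  have hle := Submodule.finrank_le (LinearMap.range Φ)
  have hsum := Finset.sum_le_sum fun i (_ : i ∈ Finset.univ) => he i
  rw [hrange, ← LinearMap.range_eq_top]
  constructor
  · intro h
    have heq : ∑ i, Module.finrank R (V ⧸ U i) = ∑ i, e i := by omega
    exact ⟨fun i => (Finset.sum_eq_sum_iff_of_le fun i _ => he i).1 heq i (Finset.mem_univ i),
      Submodule.eq_top_of_finrank_eq (by omega)⟩
  · rintro ⟨h, htop⟩
    rw [htop, finrank_top, hpi, Finset.sum_congr rfl fun i _ => h i]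

theorem surjective_pi_mkQ_iff {R V ι : Type*} [Ring R] [AddCommGroup V] [Module R V] [Finite ι]
    (U : ι → Submodule R V) :
    Function.Surjective (LinearMap.pi fun i => (U i).mkQ) ↔
      ∀ i v, ∃ w, v - w ∈ U i ∧ ∀ j, j ≠ i → w ∈ U j := by
  classical
  have := Fintype.ofFinite ι
  constructor
  · intro h i v
    obtain ⟨w, hw⟩ := h (Pi.single i ((U i).mkQ v))
    have hwj : ∀ j, (U j).mkQ w = (Pi.single i ((U i).mkQ v) : ∀ j, V ⧸ U j) j := congr_fun hw
    refine ⟨w, (Submodule.Quotient.eq _).1 ?_, fun j hj =>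
      (Submodule.Quotient.mk_eq_zero _).1 ?_⟩
    · simpa using (hwj i).symm
    · simpa [hj] using hwj j
  · intro h y
    choose v hv using fun i => (U i).mkQ_surjective (y i)
    choose w hw hwj using fun i => h i (v i)
    refine ⟨∑ i, w i, funext fun j => ?_⟩
    rw [LinearMap.pi_apply, map_sum, Finset.sum_eq_single j, ← hv j]
    · exact ((Submodule.Quotient.eq _).2 (hw j)).symm
    · exact fun i _ hij => (Submodule.Quotient.mk_eq_zero _).2 (hwj i j hij.symm)
    · simp

variable {K : Type} [Field K] {N s n t : ℕ}

/-- In degree `t`, the conditions imposed by the fat point `m i • P i` are independent of those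
imposed by the other fat points `m j • P j`. -/
def SeparatesAt (p : Fin s → Fin N → K) (m : Fin s → ℕ) (t : ℕ) (i : Fin s) : Prop :=
  ∀ f ∈ homogeneousSubmodule (Fin N) K t, ∃ g ∈ homogeneousSubmodule (Fin N) K t,
    f - g ∈ pointIdeal (p i) ^ m i ∧ ∀ j, j ≠ i → g ∈ pointIdeal (p j) ^ m j

theorem hilbFn_eq_finrank_quotient (I : Ideal (MvPolynomial (Fin N) K)) (t : ℕ) :
    hilbFn K I t = Module.finrank K (homogeneousSubmodule (Fin N) K t ⧸
      (I.restrictScalars K).comap (homogeneousSubmodule (Fin N) K t).subtype) := by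
  rw [hilbFn, gradedDim, ← Submodule.map_comap_subtype, Submodule.finrank_map_subtype_eq,
    Submodule.finrank_quotient]

theorem hilbFn_fatIdeal_eq_fatMult_iff (hn : 0 < n) {p : Fin s → Fin (n + 1) → K}
    (hp : ∀ i, p i ≠ 0) (m : Fin s → ℕ) :
    hilbFn K (fatIdeal p m) t = fatMult n m ↔ ∀ i, m i ≤ t + 1 ∧ SeparatesAt p m t i := by
  have hinf : ((fatIdeal p m).restrictScalars K).comap (homogeneousSubmodule _ K t).subtype =
      ⨅ i, pointIdealPowDegree (p i) (m i) t := by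
    ext f
    simp [fatIdeal, pointIdealPowDegree]
  have hcodim : ∀ i, Module.finrank K (_ ⧸ pointIdealPowDegree (p i) (m i) t) ≤
      (m i + n - 1).choose n ∧ (Module.finrank K (_ ⧸ pointIdealPowDegree (p i) (m i) t) =
      (m i + n - 1).choose n ↔ m i ≤ t + 1) := fun i => by
    rcases le_or_gt (m i) (t + 1) with hm | hm
    · have heq := finrank_quotient_pointIdealPowDegree hn (hp i) hm
      exact ⟨heq.le, iff_of_true heq hm⟩
    · have hlt := finrank_quotient_pointIdealPowDegree_lt hn (p i) hm
      exact ⟨hlt.le, iff_of_false hlt.ne hm.not_ge⟩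
  rw [hilbFn_eq_finrank_quotient, hinf, fatMult,
    finrank_quotient_iInf_eq_sum_iff _ fun i => (hcodim i).1, surjective_pi_mkQ_iff, forall_and]
  refine and_congr (forall_congr' fun i => (hcodim i).2) (forall_congr' fun i => ?_)
  exact ⟨fun h f hf => let ⟨g, hfg⟩ := h ⟨f, hf⟩; ⟨g, g.2, hfg⟩,
    fun h f => let ⟨g, hg, hfg⟩ := h f f.2; ⟨⟨g, hg⟩, hfg⟩⟩

theorem segreBound_le_iff (hn : 0 < n) (p : Fin s → Fin (n + 1) → K) (m : Fin s → ℕ) :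
    segreBound n p m ≤ t ↔
      ∀ j, 0 < j → ∀ Q, OnLinearSubspace p Q j → ∑ i ∈ Q, m i ≤ j * t + 1 := by
  have hdiv : ∀ j S : ℕ, 0 < j → ((S + j - 2) / j ≤ t ↔ S ≤ j * t + 1) := fun j S hj => by
    rw [Nat.div_le_iff_le_mul_add_pred hj]
    omega
  simp only [segreBound, Finset.sup_le_iff, Finset.mem_Icc, Finset.powerset_univ, Finset.mem_univ,
    forall_const, and_imp]
  constructor
  · intro h j hj Q hQ
    rcases Q.eq_empty_or_nonempty with rfl | hQne
    · simp
    have hle : ∀ k, 1 ≤ k → k ≤ n → OnLinearSubspace p Q k → ∑ i ∈ Q, m i ≤ k * t + 1 :=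
      fun k hk hkn hQk => (hdiv k _ hk).1 (by simpa [hQne, hQk] using h k hk hkn Q)
    rcases le_or_gt j n with hjn | hjn
    · exact hle j hj hjn hQ
    · exact (hle n hn le_rfl ⟨⊤, by simp, by simp⟩).trans (by gcongr)
  · intro h j hj _ Q
    split_ifs with hQ
    · exact (hdiv j _ hj).2 (h j hj Q hQ.2)
    · exact Nat.zero_le t

end Separation

/-! ### The lower bound along rational curves -/

section RationalCurves

theorem sum_rootMultiplicity_le_natDegree {R ι : Type*} [CommRing R] [IsDomain R]
    (F : Polynomial R) {Q : Finset ι} {τ : ι → R} (hτ : Set.InjOn τ Q) :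
    ∑ i ∈ Q, F.rootMultiplicity (τ i) ≤ F.natDegree := by
  classical
  calc ∑ i ∈ Q, F.rootMultiplicity (τ i) = ∑ x ∈ Q.image τ, F.roots.count x := by
        simp only [Finset.sum_image hτ, Polynomial.count_roots]
    _ ≤ ∑ x ∈ Q.image τ ∪ F.roots.toFinset, F.roots.count x :=
        Finset.sum_le_sum_of_subset Finset.subset_union_left
    _ = F.roots.card := Multiset.sum_count_eq_card fun x hx =>
        Finset.mem_union_right _ (Multiset.mem_toFinset.2 hx)
    _ ≤ F.natDegree := F.card_roots'

theorem rootMultiplicity_eq_one_of_natDegree_le_card {R : Type*} [CommRing R] [IsDomain R]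
    {F : Polynomial R} (hF : F ≠ 0) {Z : Finset R} (hZ : ∀ x ∈ Z, F.IsRoot x)
    (hdeg : F.natDegree ≤ Z.card) {x : R} (hx : x ∈ Z) : F.rootMultiplicity x = 1 := by
  classical
  have hle : Z.val ≤ F.roots :=
    (Multiset.le_iff_subset Z.nodup).2 fun y hy => (Polynomial.mem_roots hF).2 (hZ y hy)
  have hroots : Z.val = F.roots := Multiset.eq_of_le_of_card_le hle (F.card_roots'.trans hdeg)
  rw [← Polynomial.count_roots, ← hroots]
  exact Multiset.count_eq_one_of_mem Z.nodup hx

theorem rootMultiplicity_eq_of_dvd_sub {R : Type*} [CommRing R]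
    {F G : Polynomial R} {x : R} (hF : F ≠ 0)
    (h : (Polynomial.X - Polynomial.C x) ^ (F.rootMultiplicity x + 1) ∣ F - G) :
    G ≠ 0 ∧ G.rootMultiplicity x = F.rootMultiplicity x := by
  have hdvd : ∀ k ≤ F.rootMultiplicity x + 1, ((Polynomial.X - Polynomial.C x) ^ k ∣ F ↔
      (Polynomial.X - Polynomial.C x) ^ k ∣ G) := fun k hk =>
    dvd_iff_dvd_of_dvd_sub ((pow_dvd_pow _ hk).trans h)
  have hG : G ≠ 0 := by
    rintro rfl
    exact (Polynomial.le_rootMultiplicity_iff hF).not.1 (Nat.not_succ_le_self _)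
      ((hdvd _ le_rfl).2 (dvd_zero _))
  refine ⟨hG, le_antisymm (Nat.le_of_lt_succ (not_le.1 fun hlt => ?_)) ?_⟩
  · rw [Polynomial.le_rootMultiplicity_iff hG, ← hdvd _ le_rfl,
      ← Polynomial.le_rootMultiplicity_iff hF] at hlt
    exact Nat.not_succ_le_self _ hlt
  · rw [Polynomial.le_rootMultiplicity_iff hG, ← hdvd _ (Nat.le_succ _)]
    exact Polynomial.pow_rootMultiplicity_dvd F x

theorem rootMultiplicity_pow_mul_pow {R : Type*} [CommRing R] [IsDomain R] {F G : Polynomial R}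
    {x : R} (hF0 : F ≠ 0) (hF : F.rootMultiplicity x = 1) (hG : ¬ G.IsRoot x) (k e : ℕ) :
    F ^ k * G ^ e ≠ 0 ∧ (F ^ k * G ^ e).rootMultiplicity x = k := by
  classical
  have hG0 : G ≠ 0 := fun h => hG (h ▸ Polynomial.eval_zero)
  have hne : F ^ k * G ^ e ≠ 0 := mul_ne_zero (pow_ne_zero k hF0) (pow_ne_zero e hG0)
  refine ⟨hne, ?_⟩
  rw [← Polynomial.count_roots, Polynomial.roots_mul hne, Polynomial.roots_pow,
    Polynomial.roots_pow, Multiset.count_add, Multiset.count_nsmul, Multiset.count_nsmul,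
    Polynomial.count_roots, Polynomial.count_roots, hF,
    Polynomial.rootMultiplicity_eq_zero hG, mul_one, mul_zero, add_zero]

variable {K : Type} [Field K] {N s : ℕ} {p : Fin s → Fin N → K} {Q : Finset (Fin s)} {d : ℕ}

/-- The points `p i`, `i ∈ Q`, lie at distinct parameters `τ i` of a rational curve of degree at
most `d`, given by a polynomial parametrisation `c` of its affine cone. -/
def OnRationalCurve (p : Fin s → Fin N → K) (Q : Finset (Fin s)) (d : ℕ) : Prop :=
  ∃ (c : Fin N → Polynomial K) (τ : Fin s → K), (∀ j, (c j).natDegree ≤ d) ∧ Set.InjOn τ Q ∧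
    ∀ i ∈ Q, ∃ a : K, a ≠ 0 ∧ ∀ j, (c j).eval (τ i) = a * p i j

section Pullback

variable {c : Fin N → Polynomial K} {x a : K} {P : Fin N → K}
  (hc : ∀ j, (c j).eval x = a * P j) {f : MvPolynomial (Fin N) K}

include hc

theorem aeval_X_sub_mem_span (j : Fin N) :
    aeval (R := K) c (X j) - Polynomial.C a * algebraMap K (Polynomial K) (P j) ∈
      Ideal.span {Polynomial.X - Polynomial.C x} := by
  rw [aeval_X, ← Polynomial.C_eq_algebraMap, ← Polynomial.C_mul, ← hc, Ideal.mem_span_singleton]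
  exact Polynomial.X_sub_C_dvd_sub_C_eval

theorem pow_dvd_aeval_of_mem_pointIdeal_pow {m : ℕ} (hf : f ∈ pointIdeal P ^ m) :
    (Polynomial.X - Polynomial.C x) ^ m ∣ aeval c f := by
  have := algHom_mem_pow_of_mem_pointIdeal_pow (aeval c) (aeval_X_sub_mem_span hc) hf
  rwa [Ideal.span_singleton_pow, Ideal.mem_span_singleton] at this

theorem eval_aeval_linearForm (hf : f.IsHomogeneous 1) :
    (aeval c f).eval x = a * eval P f := by
  have := algHom_linearForm_sub_mem (aeval c) (aeval_X_sub_mem_span hc) hf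
  rw [Ideal.mem_span_singleton, Polynomial.dvd_iff_isRoot, Polynomial.IsRoot,
    ← Polynomial.C_eq_algebraMap] at this
  simpa [sub_eq_zero] using this

end Pullback

-- A hyperplane through all the points of `B` but one meets the curve in `d` distinct points, hence
-- transversally.
theorem exists_linearForm_rootMultiplicity_eq_one {c : Fin N → Polynomial K} {τ : Fin s → K}
    (hd : 0 < d) (hc : ∀ j, (c j).natDegree ≤ d) {B : Finset (Fin s)} (hτ : Set.InjOn τ B)
    (hcp : ∀ i ∈ B, ∃ a : K, a ≠ 0 ∧ ∀ j, (c j).eval (τ i) = a * p i j)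
    (hB : LinearIndepOn K p (B : Set (Fin s))) (hcard : B.card = d + 1)
    {i₀ : Fin s} (hi₀ : i₀ ∈ B) :
    ∃ f ∈ linearFormsVanishing (p i₀), (aeval c f).rootMultiplicity (τ i₀) = 1 := by
  classical
  obtain ⟨b, hb, hbi⟩ := Finset.exists_mem_ne (by omega : 1 < B.card) i₀
  obtain ⟨f, hf, hfb, hfB⟩ :=
    exists_linearForm_of_notMem (linearIndepOn_iff_notMem_span.1 hB b hb)
  have hvanish : ∀ i ∈ B.erase b, eval (p i) f = 0 := fun i hi =>
    hfB _ (Submodule.subset_span ⟨i, by simpa [and_comm] using hi, rfl⟩)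
  refine ⟨f, ⟨hf, hvanish i₀ (Finset.mem_erase.2 ⟨hbi.symm, hi₀⟩)⟩, ?_⟩
  have hne : aeval c f ≠ 0 := fun h => by
    obtain ⟨a, ha, hab⟩ := hcp b hb
    have := eval_aeval_linearForm hab hf
    rw [h, Polynomial.eval_zero, hfb, mul_one] at this
    exact ha this.symm
  refine rootMultiplicity_eq_one_of_natDegree_le_card hne (Z := (B.erase b).image τ)
    (fun x hx => ?_) ?_ (Finset.mem_image_of_mem τ (Finset.mem_erase.2 ⟨hbi.symm, hi₀⟩))
  · obtain ⟨i, hi, rfl⟩ := Finset.mem_image.1 hx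
    obtain ⟨a, -, hai⟩ := hcp i (Finset.mem_of_mem_erase hi)
    rw [Polynomial.IsRoot, eval_aeval_linearForm hai hf, hvanish i hi, mul_zero]
  · rw [Finset.card_image_of_injOn (hτ.mono (Finset.coe_subset.2 (Finset.erase_subset b B))),
      Finset.card_erase_of_mem hb, hcard]
    simpa using natDegree_algHom_le (aeval c) (by simpa using hc) hf

theorem exists_aeval_rootMultiplicity_add_one_eq {c : Fin N → Polynomial K} {x a : K} {i : Fin s}
    (hcp : ∀ j, (c j).eval x = a * p i j) (ha : a ≠ 0) (hp : p i ≠ 0) {l : MvPolynomial (Fin N) K}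
    (hl : l ∈ linearFormsVanishing (p i)) (hlmult : (aeval c l).rootMultiplicity x = 1)
    {m : Fin s → ℕ} {t : ℕ} (hm0 : 0 < m i) (hm : m i ≤ t + 1) (hsep : SeparatesAt p m t i) :
    ∃ g ∈ homogeneousSubmodule (Fin N) K t, aeval c g ≠ 0 ∧
      (aeval c g).rootMultiplicity x + 1 = m i ∧ ∀ j, j ≠ i → g ∈ pointIdeal (p j) ^ m j := by
  obtain ⟨k, hk⟩ := Nat.exists_eq_add_one_of_ne_zero hm0.ne'
  obtain ⟨e, rfl⟩ := Nat.exists_eq_add_of_le (by omega : k ≤ t)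
  obtain ⟨h, hh, hhp⟩ := exists_linearForm_eval_eq_one hp
  have hhx : ¬ (aeval c h).IsRoot x := by
    rwa [Polynomial.IsRoot, eval_aeval_linearForm hcp hh, hhp, mul_one]
  have hl0 : aeval c l ≠ 0 := fun h0 => by
    rw [h0, Polynomial.rootMultiplicity_zero] at hlmult
    exact zero_ne_one hlmult
  obtain ⟨hne, hmult⟩ := rootMultiplicity_pow_mul_pow hl0 hlmult hhx k e
  have hf : l ^ k * h ^ e ∈ homogeneousSubmodule (Fin N) K (k + e) := by
    rw [mem_homogeneousSubmodule]
    simpa only [one_mul] using ((mem_linearFormsVanishing.1 hl).1.pow k).mul (hh.pow e)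
  obtain ⟨g, hg, hfg, hgj⟩ := hsep _ hf
  have hdvd : (Polynomial.X - Polynomial.C x) ^
      ((aeval c l ^ k * aeval c h ^ e).rootMultiplicity x + 1) ∣
        aeval c l ^ k * aeval c h ^ e - aeval c g := by
    rw [hmult, ← hk, ← map_pow, ← map_pow, ← map_mul, ← map_sub]
    exact pow_dvd_aeval_of_mem_pointIdeal_pow hcp hfg
  obtain ⟨hg0, hgmult⟩ := rootMultiplicity_eq_of_dvd_sub hne hdvd
  exact ⟨g, hg, hg0, by rw [hgmult, hmult, hk], hgj⟩

theorem sum_le_of_onRationalCurve (hQ : OnRationalCurve p Q d) (hd : 0 < d) {B : Finset (Fin s)}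
    (hBQ : B ⊆ Q) (hB : LinearIndepOn K p (B : Set (Fin s))) (hcard : B.card = d + 1) {i₀ : Fin s}
    (hi₀ : i₀ ∈ B) {m : Fin s → ℕ} {t : ℕ} (hm0 : 0 < m i₀) (hm : m i₀ ≤ t + 1)
    (hsep : SeparatesAt p m t i₀) : ∑ i ∈ Q, m i ≤ d * t + 1 := by
  obtain ⟨c, τ, hc, hτ, hcp⟩ := hQ
  obtain ⟨l, hl, hlmult⟩ := exists_linearForm_rootMultiplicity_eq_one hd hc
    (hτ.mono (Finset.coe_subset.2 hBQ)) (fun i hi => hcp i (hBQ hi)) hB hcard hi₀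
  obtain ⟨a, ha, hcp₀⟩ := hcp i₀ (hBQ hi₀)
  obtain ⟨g, hg, hg0, hgmult, hgj⟩ := exists_aeval_rootMultiplicity_add_one_eq hcp₀ ha
    (hB.ne_zero hi₀) hl hlmult hm0 hm hsep
  have hmult : ∀ i ∈ Q.erase i₀, m i ≤ (aeval c g).rootMultiplicity (τ i) := fun i hi => by
    obtain ⟨hii₀, hiQ⟩ := Finset.mem_erase.1 hi
    obtain ⟨a, -, hai⟩ := hcp i hiQ
    exact (Polynomial.le_rootMultiplicity_iff hg0).2
      (pow_dvd_aeval_of_mem_pointIdeal_pow hai (hgj i hii₀))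
  calc ∑ i ∈ Q, m i = m i₀ + ∑ i ∈ Q.erase i₀, m i := (Finset.add_sum_erase Q m (hBQ hi₀)).symm
    _ ≤ (aeval c g).rootMultiplicity (τ i₀) + 1 +
          ∑ i ∈ Q.erase i₀, (aeval c g).rootMultiplicity (τ i) :=
        add_le_add hgmult.ge (Finset.sum_le_sum hmult)
    _ = ∑ i ∈ Q, (aeval c g).rootMultiplicity (τ i) + 1 := by
        rw [← Finset.add_sum_erase Q _ (hBQ hi₀)]
        ring
    _ ≤ t * d + 1 := by
        gcongr
        exact (sum_rootMultiplicity_le_natDegree _ hτ).trans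
          (natDegree_algHom_le (aeval c) (by simpa using hc) hg)
    _ = d * t + 1 := by rw [mul_comm]

end RationalCurves

section CurvesThroughPoints

variable {K : Type} [Field K] {N s : ℕ} {p : Fin s → Fin N → K}

theorem exists_eq_add_smul_of_finrank_le_two {V : Type*} [AddCommGroup V] [Module K V]
    [FiniteDimensional K V] {W : Submodule K V} (hW : Module.finrank K W ≤ 2) {χ : Module.Dual K V}
    {a : V} (ha : a ∈ W) (hχa : χ a = 1) :
    ∃ δ : V, ∀ v ∈ W, χ v = 1 → ∃ τ : K, v = a + τ • δ := by
  have hlt : W ⊓ LinearMap.ker χ < W := inf_le_left.lt_of_not_ge fun h => by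
    have hker : χ a = 0 := (h ha).2
    exact zero_ne_one (hker.symm.trans hχa)
  obtain ⟨δ, hδ⟩ := finrank_le_one_iff.1
    (Nat.le_of_lt_succ ((Submodule.finrank_lt_finrank_of_lt hlt).trans_le hW))
  refine ⟨δ, fun v hv hχv => ?_⟩
  obtain ⟨τ, hτ⟩ := hδ ⟨v - a, sub_mem hv ha, by simp [hχv, hχa]⟩
  exact ⟨τ, by rw [← Submodule.coe_smul, hτ, add_sub_cancel]⟩

-- The affine chart `χ = 1` of the line contains all the points when `χ` vanishes at none of them.
theorem onRationalCurve_one_of_finrank_le_two [Infinite K] (hp : ProjDistinct p)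
    {Q : Finset (Fin s)} (hQ : Q.Nonempty) {W : Submodule K (Fin N → K)}
    (hW : Module.finrank K W ≤ 2) (hQW : ∀ i ∈ Q, p i ∈ W) : OnRationalCurve p Q 1 := by
  obtain ⟨χ, hχ⟩ := Module.exists_dual_forall_apply_ne_zero (K := K) p hp.1
  have hχ' : ∀ i, χ ((χ (p i))⁻¹ • p i) = 1 := fun i => by
    rw [map_smul, smul_eq_mul, inv_mul_cancel₀ (hχ i)]
  obtain ⟨a, haW, hχa⟩ : ∃ a ∈ W, χ a = 1 :=
    hQ.elim fun i hi => ⟨_, W.smul_mem (χ (p i))⁻¹ (hQW i hi), hχ' i⟩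
  obtain ⟨δ, hδ⟩ := exists_eq_add_smul_of_finrank_le_two hW haW hχa
  choose! τ hτ using fun i (hi : i ∈ Q) => hδ _ (W.smul_mem (χ (p i))⁻¹ (hQW i hi)) (hχ' i)
  refine ⟨fun j => Polynomial.C (δ j) * Polynomial.X + Polynomial.C (a j), τ,
    fun j => Polynomial.natDegree_linear_le, fun i hi k hk hik => ?_,
    fun i hi => ⟨(χ (p i))⁻¹, inv_ne_zero (hχ i), fun j => ?_⟩⟩
  · by_contra hne
    have heq : (χ (p i))⁻¹ • p i = (χ (p k))⁻¹ • p k := by rw [hτ i hi, hτ k hk, hik]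
    exact hp.2 i k hne (χ (p i) * (χ (p k))⁻¹) (by rw [mul_smul, ← heq, smul_inv_smul₀ (hχ i)])
  · have hτj : (χ (p i))⁻¹ * p i j = a j + τ i * δ j := congrFun (hτ i hi) j
    rw [Polynomial.eval_add, Polynomial.eval_mul, Polynomial.eval_C, Polynomial.eval_X,
      Polynomial.eval_C, hτj]
    ring

section NodalCurve

variable {ι : Type*} [Fintype ι] [DecidableEq ι] {σ w z : ι → K} {e : ι → Fin N → K}

/-- The rational normal curve `τ ↦ ∑ k, w k • ∏ l ≠ k, (τ - σ l) • e k`, which passes through the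
point `e k` at the parameter `σ k`. -/
def nodalCurve (σ w : ι → K) (e : ι → Fin N → K) (j : Fin N) : Polynomial K :=
  ∑ k, Polynomial.C (w k * e k j) * Lagrange.nodal (Finset.univ.erase k) σ

theorem natDegree_nodalCurve_le (j : Fin N) :
    (nodalCurve σ w e j).natDegree ≤ Fintype.card ι - 1 :=
  Polynomial.natDegree_sum_le_of_forall_le _ _ fun k hk =>
    (Polynomial.natDegree_C_mul_le _ _).trans_eq <| by
      rw [Lagrange.natDegree_nodal, Finset.card_erase_of_mem hk, Finset.card_univ]

theorem eval_nodalCurve_node (k : ι) (j : Fin N) :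
    (nodalCurve σ w e j).eval (σ k) =
      w k * (Lagrange.nodal (Finset.univ.erase k) σ).eval (σ k) * e k j := by
  rw [nodalCurve, Polynomial.eval_finsetSum, Finset.sum_eq_single k]
  · rw [Polynomial.eval_mul, Polynomial.eval_C, mul_right_comm]
  · intro l _ hlk
    rw [Polynomial.eval_mul, Lagrange.eval_nodal_at_node
      (Finset.mem_erase.2 ⟨hlk.symm, Finset.mem_univ k⟩), mul_zero]
  · exact fun hk => absurd (Finset.mem_univ k) hk

theorem eval_nodalCurve_of_forall_eq {τ a : K} (hw : ∀ k, w k = a * z k * (τ - σ k)) (j : Fin N) :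
    (nodalCurve σ w e j).eval τ =
      a * (Lagrange.nodal Finset.univ σ).eval τ * (∑ k, z k • e k) j := by
  rw [nodalCurve, Polynomial.eval_finsetSum, Finset.sum_apply, Finset.mul_sum]
  refine Finset.sum_congr rfl fun k _ => ?_
  rw [Polynomial.eval_mul, Polynomial.eval_C, hw, Pi.smul_apply, smul_eq_mul, Lagrange.eval_nodal,
    Lagrange.eval_nodal, ← Finset.mul_prod_erase _ _ (Finset.mem_univ k)]
  ring

end NodalCurve

theorem exists_injective_nodes {ι : Type*} [Finite ι] [Infinite K] {x y : ι → K}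
    (hx : ∀ k, x k ≠ 0) (hy : ∀ k, y k ≠ 0) (hxy : ∀ k l, k ≠ l → x k * y l ≠ x l * y k) :
    ∃ (c : K) (σ : ι → K), c ≠ 0 ∧ Function.Injective σ ∧ (∀ k, σ k ≠ 0 ∧ σ k ≠ 1) ∧
      ∀ k, x k * σ k = c * y k * (1 - σ k) := by
  classical
  have := Fintype.ofFinite ι
  obtain ⟨c, hc⟩ := Infinite.exists_notMem_finset
    (insert 0 (Finset.univ.image fun k => x k / y k))
  obtain ⟨hc0, hcxy⟩ : c ≠ 0 ∧ ∀ k, x k / y k ≠ c := by simpa using hc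
  have hden : ∀ k, c * y k - x k ≠ 0 := fun k h =>
    hcxy k ((div_eq_iff (hy k)).2 (sub_eq_zero.1 h).symm)
  refine ⟨-c, fun k => c * y k / (c * y k - x k), neg_ne_zero.2 hc0, fun k l hkl => ?_,
    fun k => ⟨?_, ?_⟩, fun k => ?_⟩
  · by_contra hne
    rw [div_eq_div_iff (hden k) (hden l)] at hkl
    exact hxy k l hne (mul_left_cancel₀ hc0 (by linear_combination hkl))
  · exact div_ne_zero (mul_ne_zero hc0 (hy k)) (hden k)
  · rw [Ne, div_eq_one_iff_eq (hden k), eq_comm, sub_eq_self]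
    exact hx k
  · have := hden k
    field_simp
    ring

theorem exists_extend_injOn_insert_insert {α β : Type*} [DecidableEq α] {B : Finset α} {u v : α}
    (hu : u ∉ B) (hv : v ∉ B) {σ : B → β} (hσ : Function.Injective σ) {a b : β} (hab : a ≠ b)
    (hσab : ∀ k, σ k ≠ a ∧ σ k ≠ b) :
    ∃ τ : α → β, Set.InjOn τ (insert v (insert u B) : Finset α) ∧ (∀ k : B, τ k = σ k) ∧
      τ u = a ∧ (v ≠ u → τ v = b) := by
  let τ : α → β := fun i => if h : i ∈ B then σ ⟨i, h⟩ else if i = u then a else b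
  have hτB : ∀ k : B, τ k = σ k := fun k => dif_pos k.2
  have hτu : τ u = a := (dif_neg hu).trans (if_pos rfl)
  have hτv : v ≠ u → τ v = b := fun hvu => (dif_neg hv).trans (if_neg hvu)
  refine ⟨τ, ?_, hτB, hτu, hτv⟩
  have hinj : Set.InjOn τ B := fun i hi k hk hik =>
    congrArg Subtype.val (hσ ((hτB ⟨i, hi⟩).symm.trans (hik.trans (hτB ⟨k, hk⟩))))
  have hinju : Set.InjOn τ (insert u (B : Set α)) := by
    refine (Set.injOn_insert (by simpa using hu)).2 ⟨hinj, ?_⟩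
    rintro ⟨i, hi, hiu⟩
    exact (hσab ⟨i, hi⟩).1 ((hτB ⟨i, hi⟩).symm.trans (hiu.trans hτu))
  rw [Finset.coe_insert, Finset.coe_insert]
  rcases eq_or_ne v u with rfl | hvu
  · rwa [Set.insert_idem]
  refine (Set.injOn_insert (by simp [hvu, hv])).2 ⟨hinju, ?_⟩
  rintro ⟨i, rfl | hi, hiv⟩
  · exact hab (hτu.symm.trans (hiv.trans (hτv hvu)))
  · exact (hσab ⟨i, hi⟩).2 ((hτB ⟨i, hi⟩).symm.trans (hiv.trans (hτv hvu)))

theorem onRationalCurve_insert_insert [Infinite K] {d : ℕ} {B : Finset (Fin s)}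
    (hcard : B.card = d + 1) {u v : Fin s} (hu : u ∉ B) (hv : v ∉ B) {x y : B → K}
    (hx : ∀ k, x k ≠ 0) (hy : ∀ k, y k ≠ 0) (hxy : ∀ k l, k ≠ l → x k * y l ≠ x l * y k)
    (hxu : ∑ k, x k • p k = p u) (hyv : v ≠ u → ∑ k, y k • p k = p v) :
    OnRationalCurve p (insert v (insert u B)) d := by
  obtain ⟨c, σ, hc, hσ, hσ01, hσxy⟩ := exists_injective_nodes hx hy hxy
  obtain ⟨τ, hτ, hτB, hτu, hτv⟩ := exists_extend_injOn_insert_insert hu hv hσ zero_ne_one hσ01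
  have hnodal : ∀ a, (∀ k, σ k ≠ a) → (Lagrange.nodal Finset.univ σ).eval a ≠ 0 := fun a ha =>
    Lagrange.eval_nodal_not_at_node fun k _ => (ha k).symm
  refine ⟨nodalCurve σ (fun k => x k * σ k) (fun k => p k), τ, fun j => ?_, hτ, fun i hi => ?_⟩
  · simpa [hcard] using natDegree_nodalCurve_le (σ := σ) (e := fun k : B => p k) j
  · have atu : ∃ a : K, a ≠ 0 ∧ ∀ j,
        (nodalCurve σ (fun k => x k * σ k) (fun k => p k) j).eval (τ u) = a * p u j := by
      rw [hτu, ← hxu]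
      exact ⟨_, mul_ne_zero (neg_ne_zero.2 one_ne_zero) (hnodal 0 fun k => (hσ01 k).1),
        eval_nodalCurve_of_forall_eq fun k => by ring⟩
    rcases Finset.mem_insert.1 hi with rfl | hi
    · rcases eq_or_ne i u with rfl | hiu
      · exact atu
      · rw [hτv hiu, ← hyv hiu]
        exact ⟨_, mul_ne_zero hc (hnodal 1 fun k => (hσ01 k).2),
          eval_nodalCurve_of_forall_eq hσxy⟩
    rcases Finset.mem_insert.1 hi with rfl | hi
    · exact atu
    · have hτi : τ i = σ ⟨i, hi⟩ := hτB ⟨i, hi⟩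
      rw [hτi]
      exact ⟨_, mul_ne_zero (mul_ne_zero (hx ⟨i, hi⟩) (hσ01 ⟨i, hi⟩).1)
          (Lagrange.eval_nodal_not_at_node fun k hk => hσ.ne (Finset.ne_of_mem_erase hk).symm),
        eval_nodalCurve_node (e := fun k : B => p k) ⟨i, hi⟩⟩

section GeneralPosition

variable {ι V : Type*} [AddCommGroup V] [Module K V] {q : ι → V} {B : Finset ι}

theorem sum_smul_mem_span_image {z : B → K} {D : Set ι} (hz : ∀ b : B, ↑b ∉ D → z b = 0) :
    ∑ b, z b • q b ∈ Submodule.span K (q '' D) := by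
  refine Submodule.sum_mem _ fun b _ => ?_
  by_cases hb : (b : ι) ∈ D
  · exact Submodule.smul_mem _ _ (Submodule.subset_span ⟨b, hb, rfl⟩)
  · rw [hz b hb, zero_smul]
    exact Submodule.zero_mem _

variable [DecidableEq ι] {u v : ι} {x y : B → K}

theorem coordinate_ne_zero (hu : u ∉ B) (hxu : ∑ b, x b • q b = q u) {k : B}
    (hli : LinearIndepOn K q (insert u (B.erase k) : Finset ι)) : x k ≠ 0 := by
  intro hk
  rw [Finset.coe_insert, linearIndepOn_insert (by simp [hu])] at hli
  refine hli.2 (hxu ▸ sum_smul_mem_span_image fun b hb => ?_)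
  have hbk : (b : ι) = k := by_contra fun hne => hb (Finset.mem_erase.2 ⟨hne, b.2⟩)
  rwa [Subtype.ext hbk]

theorem coordinate_mul_ne_mul (hv : v ∉ B) (hvu : v ≠ u)
    (hxu : ∑ b, x b • q b = q u) (hyv : ∑ b, y b • q b = q v) {k l : B} (hk : x k ≠ 0)
    (hli : LinearIndepOn K q (insert v (insert u ((B.erase k).erase l)) : Finset ι)) :
    x k * y l ≠ x l * y k := by
  intro h
  rw [Finset.coe_insert, linearIndepOn_insert (by simp [hv, hvu])] at hli
  refine hli.2 ((Submodule.smul_mem_iff _ hk).1 ?_)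
  have hsub : x k • q v - y k • q u ∈ Submodule.span K (q '' ↑((B.erase k).erase l)) := by
    rw [← hxu, ← hyv, Finset.smul_sum, Finset.smul_sum, ← Finset.sum_sub_distrib]
    simp only [smul_smul, ← sub_smul]
    refine sum_smul_mem_span_image fun b hb => ?_
    obtain rfl | rfl : b = l ∨ b = k := by
      by_contra! hne
      exact hb (Finset.mem_erase.2 ⟨Subtype.coe_ne_coe.2 hne.1,
        Finset.mem_erase.2 ⟨Subtype.coe_ne_coe.2 hne.2, b.2⟩⟩)
    · linear_combination h
    · ring
  rw [← sub_add_cancel (x k • q v) (y k • q u)]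
  exact add_mem (Submodule.span_mono (by gcongr; simp) hsub)
    (Submodule.smul_mem _ _ (Submodule.subset_span ⟨u, by simp, rfl⟩))

omit [DecidableEq ι] in
theorem exists_sum_smul_eq_of_mem [FiniteDimensional K V] {W : Submodule K V}
    (hB : LinearIndepOn K q (B : Set ι)) (hW : Module.finrank K W ≤ B.card) (hBW : ∀ b ∈ B, q b ∈ W)
    {a : V} (ha : a ∈ W) : ∃ x : B → K, ∑ b, x b • q b = a := by
  have hspan : Submodule.span K (Set.range fun b : B => q b) = W := by
    refine Submodule.eq_of_le_of_finrank_le (Submodule.span_le.2 ?_) ?_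
    · rintro _ ⟨b, rfl⟩
      exact hBW b b.2
    · exact hW.trans_eq ((finrank_span_eq_card hB).trans (Fintype.card_coe B)).symm
  exact Submodule.mem_span_range_iff_exists_fun K |>.1 (hspan ▸ ha)

omit [DecidableEq ι] in
theorem finrank_span_image_lt_card_of_not_linearIndepOn (h : ¬ LinearIndepOn K q (B : Set ι)) :
    Module.finrank K (Submodule.span K (q '' B)) < B.card := by
  refine not_le.1 fun hle => h (linearIndependent_iff_card_le_finrank_span.2 ?_)
  rw [Set.image_eq_range] at hle
  exact (Fintype.card_coe B).trans_le hle

end GeneralPosition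

theorem exists_eq_insert_insert {α : Type*} [DecidableEq α] {B Q : Finset α} (hBQ : B ⊆ Q)
    (h₁ : B.card < Q.card) (h₂ : Q.card ≤ B.card + 2) :
    ∃ u ∉ B, ∃ v ∉ B, Q = insert v (insert u B) := by
  obtain ⟨u, huQ, hu⟩ := Finset.exists_mem_notMem_of_card_lt_card h₁
  have huB : insert u B ⊆ Q := Finset.insert_subset huQ hBQ
  by_cases hcard : Q.card ≤ (insert u B).card
  · exact ⟨u, hu, u, hu, by rw [Finset.insert_idem, Finset.eq_of_subset_of_card_le huB hcard]⟩
  obtain ⟨v, hvQ, hv⟩ := Finset.exists_mem_notMem_of_card_lt_card (not_le.1 hcard)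
  refine ⟨u, hu, v, fun h => hv (Finset.mem_insert_of_mem h),
    (Finset.eq_of_subset_of_card_le (Finset.insert_subset hvQ huB) ?_).symm⟩
  rwa [Finset.card_insert_of_notMem hv, Finset.card_insert_of_notMem hu]

theorem exists_injective_ne_zero (R ι : Type*) [Zero R] [Infinite R] [Finite ι] :
    ∃ ρ : ι → R, Function.Injective ρ ∧ ∀ k, ρ k ≠ 0 := by
  obtain ⟨n, ⟨φ⟩⟩ := Finite.exists_equiv_fin ι
  have : Infinite ({0}ᶜ : Set R) := (Set.finite_singleton 0).infinite_compl.to_subtype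
  let ψ := Infinite.natEmbedding ({0}ᶜ : Set R)
  exact ⟨fun k => ψ (φ k), Subtype.val_injective.comp
    (ψ.injective.comp (Fin.val_injective.comp φ.injective)), fun k => (ψ (φ k)).2⟩

-- A second point in general position, when `Q` has only `d + 2` points, is free to choose.
theorem onRationalCurve_of_generalPosition [Infinite K] {d : ℕ} {Q : Finset (Fin s)}
    {W : Submodule K (Fin N → K)} (hW : Module.finrank K W ≤ d + 1) (hQW : ∀ i ∈ Q, p i ∈ W)
    (hgp : ∀ T ⊆ Q, T.card = d + 1 → LinearIndepOn K p (T : Set (Fin s)))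
    (h₂ : d + 2 ≤ Q.card) (h₃ : Q.card ≤ d + 3) : OnRationalCurve p Q d := by
  obtain ⟨B, hBQ, hB⟩ := Finset.exists_subset_card_eq (by omega : d + 1 ≤ Q.card)
  obtain ⟨u, hu, v, hv, rfl⟩ :=
    exists_eq_insert_insert hBQ (by omega : B.card < Q.card) (by omega)
  have hcoord : ∀ i ∈ insert v (insert u B), i ∉ B →
      ∃ x : B → K, ∑ b, x b • p b = p i ∧ ∀ k, x k ≠ 0 := fun i hi hiB => by
    obtain ⟨x, hx⟩ := exists_sum_smul_eq_of_mem (hgp B hBQ hB) (hW.trans_eq hB.symm)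
      (fun b hb => hQW b (hBQ hb)) (hQW i hi)
    refine ⟨x, hx, fun k => coordinate_ne_zero hiB hx (hgp _ ?_ ?_)⟩
    · exact Finset.insert_subset hi ((Finset.erase_subset k.1 B).trans hBQ)
    · rw [Finset.card_insert_of_notMem (by simp [hiB]), Finset.card_erase_add_one k.2, hB]
  obtain ⟨x, hxu, hx⟩ := hcoord u (by simp) hu
  obtain ⟨y, hyv, hy, hxy⟩ : ∃ y : B → K, (v ≠ u → ∑ b, y b • p b = p v) ∧ (∀ k, y k ≠ 0) ∧
      ∀ k l, k ≠ l → x k * y l ≠ x l * y k := by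
    rcases eq_or_ne v u with rfl | hvu
    · obtain ⟨ρ, hρ, hρ0⟩ := exists_injective_ne_zero K B
      exact ⟨fun k => x k * ρ k, fun h => absurd rfl h, fun k => mul_ne_zero (hx k) (hρ0 k),
        fun k l hkl h => hkl (hρ (mul_left_cancel₀ (mul_ne_zero (hx k) (hx l))
          (by linear_combination -h)))⟩
    · obtain ⟨y, hyv, hy⟩ := hcoord v (by simp) hv
      refine ⟨y, fun _ => hyv, hy, fun k l hkl =>
        coordinate_mul_ne_mul hv hvu hxu hyv (hx k) (hgp _ ?_ ?_)⟩
      · gcongr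
        exact ((B.erase k).erase_subset l.1).trans (B.erase_subset k.1)
      · rw [Finset.card_insert_of_notMem (by simp [hv, hvu]),
          Finset.card_insert_of_notMem (by simp [hu]), Finset.card_erase_add_one
            (Finset.mem_erase.2 ⟨Subtype.coe_ne_coe.2 hkl.symm, l.2⟩),
          Finset.card_erase_add_one k.2, hB]
  exact onRationalCurve_insert_insert hB hu hv hx hy hxy hxu hyv

theorem sum_le_of_generalPosition [Infinite K] {d : ℕ} {Q : Finset (Fin s)}
    {W : Submodule K (Fin N → K)} (hW : Module.finrank K W ≤ d + 1) (hQW : ∀ i ∈ Q, p i ∈ W)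
    (hgp : ∀ T ⊆ Q, T.card = d + 1 → LinearIndepOn K p (T : Set (Fin s))) (hd : 0 < d)
    (h₂ : d + 2 ≤ Q.card) (h₃ : Q.card ≤ d + 3) {m : Fin s → ℕ} (hm : ∀ i, 0 < m i) {t : ℕ}
    (hsep : ∀ i, m i ≤ t + 1 ∧ SeparatesAt p m t i) : ∑ i ∈ Q, m i ≤ d * t + 1 := by
  obtain ⟨B, hBQ, hB⟩ := Finset.exists_subset_card_eq (by omega : d + 1 ≤ Q.card)
  obtain ⟨i, hi⟩ := Finset.card_pos.1 (by omega : 0 < B.card)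
  exact sum_le_of_onRationalCurve (onRationalCurve_of_generalPosition hW hQW hgp h₂ h₃) hd hBQ
    (hgp B hBQ hB) hB hi (hm i) (hsep i).1 (hsep i).2

theorem sum_le_of_finrank_le_two [Infinite K] (hp : ProjDistinct p) {Q : Finset (Fin s)}
    (hQ : 1 < Q.card) {W : Submodule K (Fin N → K)} (hW : Module.finrank K W ≤ 2)
    (hQW : ∀ i ∈ Q, p i ∈ W) {m : Fin s → ℕ} (hm : ∀ i, 0 < m i) {t : ℕ}
    (hsep : ∀ i, m i ≤ t + 1 ∧ SeparatesAt p m t i) : ∑ i ∈ Q, m i ≤ t + 1 := by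
  obtain ⟨a, ha, b, hb, hab⟩ := Finset.one_lt_card.1 hQ
  have hli : LinearIndepOn K p {a, b} := (LinearIndepOn.pair_iff p hab).2 fun c e hce => by
    have hc : c = 0 := by
      by_contra hc
      refine hp.2 a b hab (-(c⁻¹ * e)) ?_
      rw [neg_smul, mul_smul, eq_neg_iff_add_eq_zero, ← smul_right_injective _ hc |>.eq_iff,
        smul_add, smul_inv_smul₀ hc, hce, smul_zero]
    rw [hc, zero_smul, zero_add] at hce
    exact ⟨hc, (smul_eq_zero.1 hce).resolve_right (hp.1 b)⟩
  simpa using sum_le_of_onRationalCurve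
    (onRationalCurve_one_of_finrank_le_two hp ⟨a, ha⟩ hW hQW) one_pos
    (B := {a, b}) (by simp [Finset.insert_subset_iff, ha, hb]) (by simpa using hli)
    (Finset.card_pair hab) (Finset.mem_insert_self a _) (hm a) (hsep a).1 (hsep a).2

section Equimultiple

variable [Infinite K] (hp : ProjDistinct p) {Q : Finset (Fin s)} {m t : ℕ} (hm : 0 < m)
  (hsep : ∀ i, m ≤ t + 1 ∧ SeparatesAt p (fun _ => m) t i)

include hp hm hsep

theorem card_mul_le_of_finrank_le_two (hQ : 1 < Q.card) {W : Submodule K (Fin N → K)}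
    (hW : Module.finrank K W ≤ 2) (hQW : ∀ i ∈ Q, p i ∈ W) : Q.card * m ≤ t + 1 := by
  simpa using sum_le_of_finrank_le_two hp hQ hW hQW (fun _ => hm) hsep

theorem two_mul_le_of_one_lt_card (hQ : 1 < Q.card) : 2 * m ≤ t + 1 := by
  classical
  obtain ⟨T, -, hT⟩ := Finset.exists_subset_card_eq (by omega : 2 ≤ Q.card)
  rw [← hT]
  refine card_mul_le_of_finrank_le_two hp hm hsep (by omega) (W := Submodule.span K (p '' T)) ?_
    fun i hi => Submodule.subset_span ⟨i, hi, rfl⟩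
  rw [← Finset.coe_image]
  exact (finrank_span_finset_le_card _).trans (Finset.card_image_le.trans_eq hT)

theorem card_mul_le_of_finrank_le_three (hQ : 1 < Q.card) (hQ5 : Q.card ≤ 5)
    {W : Submodule K (Fin N → K)} (hW : Module.finrank K W ≤ 3) (hQW : ∀ i ∈ Q, p i ∈ W) :
    Q.card * m ≤ 2 * t + 1 := by
  have h2m := two_mul_le_of_one_lt_card hp hm hsep hQ
  have hmono : ∀ k, Q.card ≤ k → Q.card * m ≤ k * m := fun k => Nat.mul_le_mul_right m
  obtain hle | hlt := le_or_gt Q.card 3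
  · have := hmono 3 hle
    omega
  by_cases hgp : ∀ T ⊆ Q, T.card = 2 + 1 → LinearIndepOn K p (T : Set (Fin s))
  · simpa using sum_le_of_generalPosition hW hQW hgp two_pos hlt hQ5 (fun _ => hm) hsep
  push Not at hgp
  obtain ⟨T, -, hT, hdep⟩ := hgp
  have h3m := card_mul_le_of_finrank_le_two hp hm hsep (by omega : 1 < T.card)
    (Nat.le_of_lt_succ ((finrank_span_image_lt_card_of_not_linearIndepOn hdep).trans_eq hT))
    fun i hi => Submodule.subset_span ⟨i, hi, rfl⟩
  rw [hT] at h3m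
  have := hmono 5 hQ5
  omega

theorem card_mul_le_of_finrank_le_four (hQ : Q.card = 5)
    {W : Submodule K (Fin N → K)} (hW : Module.finrank K W ≤ 4) (hQW : ∀ i ∈ Q, p i ∈ W) :
    Q.card * m ≤ 3 * t + 1 := by
  by_cases hgp : ∀ T ⊆ Q, T.card = 3 + 1 → LinearIndepOn K p (T : Set (Fin s))
  · simpa using sum_le_of_generalPosition hW hQW hgp three_pos hQ.ge (by omega) (fun _ => hm) hsep
  push Not at hgp
  obtain ⟨T, -, hT, hdep⟩ := hgp
  have h4m := card_mul_le_of_finrank_le_three hp hm hsep (by omega : 1 < T.card) (by omega)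
    (Nat.le_of_lt_succ ((finrank_span_image_lt_card_of_not_linearIndepOn hdep).trans_eq hT))
    fun i hi => Submodule.subset_span ⟨i, hi, rfl⟩
  have h2m := two_mul_le_of_one_lt_card hp hm hsep (by omega : 1 < Q.card)
  rw [hT] at h4m
  rw [hQ]
  omega

theorem card_mul_le_of_onLinearSubspace (hQ5 : Q.card ≤ 5) {j : ℕ} (hj : 0 < j)
    (hQ : OnLinearSubspace p Q j) : Q.card * m ≤ j * t + 1 := by
  obtain ⟨W, hW, hQW⟩ := hQ
  have hmono : ∀ k, Q.card ≤ k → Q.card * m ≤ k * m := fun k => Nat.mul_le_mul_right m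
  obtain hle | hlt := le_or_gt Q.card 1
  · obtain rfl | ⟨i, -⟩ := Q.eq_empty_or_nonempty
    · simp
    · have := (hsep i).1
      have := hmono 1 hle
      nlinarith
  have h2m := two_mul_le_of_one_lt_card hp hm hsep hlt
  have hmono5 := hmono 5 hQ5
  obtain rfl | rfl | rfl | hj4 : j = 1 ∨ j = 2 ∨ j = 3 ∨ 4 ≤ j := by omega
  · simpa using card_mul_le_of_finrank_le_two hp hm hsep hlt hW hQW
  · exact card_mul_le_of_finrank_le_three hp hm hsep hlt hQ5 hW hQW
  · obtain hQ5 | hQ4 := hQ5.eq_or_lt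
    · exact card_mul_le_of_finrank_le_four hp hm hsep hQ5 hW hQW
    · have := hmono 4 (Nat.le_of_lt_succ hQ4)
      omega
  · have := Nat.mul_le_mul_right t hj4
    omega

end Equimultiple

theorem segreBound_le_of_separatesAt [Infinite K] {n s : ℕ} (hn : 0 < n) (hs : s ≤ 5)
    {p : Fin s → Fin (n + 1) → K} (hp : ProjDistinct p) {m t : ℕ} (hm : 0 < m)
    (hsep : ∀ i, m ≤ t + 1 ∧ SeparatesAt p (fun _ => m) t i) :
    segreBound n p (fun _ => m) ≤ t := by
  refine (segreBound_le_iff hn p _).2 fun j hj Q hQ => ?_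
  have hcard : Q.card ≤ 5 := (Finset.card_le_univ Q).trans (by rwa [Fintype.card_fin])
  simpa using card_mul_le_of_onLinearSubspace hp hm hsep hcard hj hQ

end CurvesThroughPoints

/-! ### The upper bound by products of linear forms -/

section ProductsOfLinearForms

variable {K : Type} [Field K] {N s t : ℕ} {p : Fin s → Fin N → K} {m : Fin s → ℕ} {i : Fin s}

theorem prod_mem_pow_card_filter {ι R : Type*} [Fintype ι] [CommSemiring R] (I : Ideal R)
    {f : ι → R} (q : ι → Prop) [DecidablePred q] (hf : ∀ l, q l → f l ∈ I) :
    ∏ l, f l ∈ I ^ (Finset.univ.filter q).card := by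
  rw [← Finset.prod_filter_mul_prod_filter_not Finset.univ q, ← Finset.prod_const]
  exact Ideal.mul_mem_right _ _ (Ideal.prod_mem_prod fun l hl => hf l (Finset.mem_filter.1 hl).2)

theorem isHomogeneous_of_mem_linearFormsVanishing_pow {P : Fin N → K} {k : ℕ}
    {f : MvPolynomial (Fin N) K} (hf : f ∈ linearFormsVanishing P ^ k) : f.IsHomogeneous k := by
  have hle : linearFormsVanishing P ≤ homogeneousSubmodule (Fin N) K 1 := fun _ h => h.1
  have hpow := pow_le_pow_left' hle k hf
  rwa [homogeneousSubmodule_one_pow] at hpow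

-- Subtract from `f` the multiple of `F` agreeing with it at `P`.
theorem mul_mem_sup_pow_succ_mul {P : Fin N → K} (hP : P ≠ 0) {k : ℕ}
    {π F f : MvPolynomial (Fin N) K} {J : Submodule K (MvPolynomial (Fin N) K)}
    (hπ : π ∈ linearFormsVanishing P ^ k) (hF : F.IsHomogeneous (t - k)) (hFP : eval P F ≠ 0)
    (hπF : π * F ∈ J) (hf : f.IsHomogeneous (t - k)) :
    π * f ∈ J ⊔ linearFormsVanishing P ^ (k + 1) *
      homogeneousSubmodule (Fin N) K (t - (k + 1)) := by
  set c := eval P f / eval P F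
  have hrest : f - c • F ∈ linearFormsVanishing P *
      homogeneousSubmodule (Fin N) K (t - k - 1) :=
    mem_linearFormsVanishing_mul hP (sub_mem hf (Submodule.smul_mem _ c hF))
      (by rw [map_sub, smul_eval, div_mul_cancel₀ _ hFP, sub_self])
  have hsplit : π * f = c • (π * F) + π * (f - c • F) := by
    rw [mul_sub, mul_smul_comm, add_sub_cancel]
  rw [hsplit, pow_succ, mul_assoc, ← Nat.sub_sub]
  exact Submodule.add_mem_sup (Submodule.smul_mem _ _ hπF) (Submodule.mul_mem_mul hπ hrest)

open scoped Pointwise in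
theorem separatesAt_of_exists_form (hi : p i ≠ 0) (hmt : m i ≤ t + 1)
    {S : Set (MvPolynomial (Fin N) K)} (hS : Submodule.span K S = linearFormsVanishing (p i))
    (hform : ∀ k < m i, ∀ π ∈ S ^ k, ∃ F : MvPolynomial (Fin N) K, F.IsHomogeneous (t - k) ∧
      eval (p i) F ≠ 0 ∧ ∀ j, j ≠ i → π * F ∈ pointIdeal (p j) ^ m j) :
    SeparatesAt p m t i := by
  set L := linearFormsVanishing (p i)
  let J : Submodule K (MvPolynomial (Fin N) K) :=
    homogeneousSubmodule (Fin N) K t ⊓ ⨅ j, ⨅ _ : j ≠ i, (pointIdeal (p j) ^ m j).restrictScalars K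
  have hpow : ∀ k, L ^ k = Submodule.span K (S ^ k) := fun k => by rw [← hS, Submodule.span_pow]
  have hfiltration : ∀ k ≤ m i, homogeneousSubmodule (Fin N) K t ≤
      J ⊔ L ^ k * homogeneousSubmodule (Fin N) K (t - k) := by
    intro k
    induction k with
    | zero => simp
    | succ k ih =>
      intro hk
      refine (ih (by omega)).trans (sup_le le_sup_left ?_)
      rw [hpow k, ← Submodule.span_eq (homogeneousSubmodule (Fin N) K (t - k)),
        Submodule.span_mul_span, Submodule.span_le]
      rintro _ ⟨π, hπ, f, hf, rfl⟩
      have hπL : π ∈ L ^ k := hpow k ▸ Submodule.subset_span hπ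
      obtain ⟨F, hF, hFi, hFj⟩ := hform k hk π hπ
      refine mul_mem_sup_pow_succ_mul hi hπL hF hFi ⟨?_, ?_⟩ hf
      · have hπF := (isHomogeneous_of_mem_linearFormsVanishing_pow hπL).mul hF
        rwa [Nat.add_sub_cancel' (by omega)] at hπF
      · simpa only [SetLike.mem_coe, Submodule.mem_iInf, Submodule.restrictScalars_mem] using hFj
  intro f hf
  obtain ⟨g, hg, u, hu, rfl⟩ := Submodule.mem_sup.1 (hfiltration (m i) le_rfl hf)
  refine ⟨g, hg.1, ?_, ?_⟩
  · rw [add_sub_cancel_left]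
    exact linearFormsVanishing_pow_mul_le _ _ _ hu
  · simpa only [SetLike.mem_coe, Submodule.mem_iInf, Submodule.restrictScalars_mem] using hg.2

theorem separatesAt_of_exists_slots (hi : p i ≠ 0) (hmt : m i ≤ t + 1) (B : Set (Finset (Fin s)))
    (hB : linearFormsVanishing (p i) ≤ Submodule.span K
      {ℓ | ℓ ∈ linearFormsVanishing (p i) ∧ ∃ b ∈ B, ∀ j ∈ b, eval (p j) ℓ = 0})
    (hslots : ∀ k < m i, ∀ b : Fin k → Finset (Fin s), (∀ l, b l ∈ B) →
      ∃ A : Fin (t - k) → Finset (Fin s),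
        (∀ l, p i ∉ Submodule.span K (p '' (A l : Set (Fin s)))) ∧
        ∀ j, j ≠ i → m j ≤ (Finset.univ.filter fun l => j ∈ b l).card +
          (Finset.univ.filter fun l => j ∈ A l).card) :
    SeparatesAt p m t i := by
  refine separatesAt_of_exists_form hi hmt
    (le_antisymm (Submodule.span_le.2 fun ℓ hℓ => hℓ.1) hB) fun k hk π hπ => ?_
  obtain ⟨f, rfl⟩ := Set.mem_pow.1 hπ
  choose b hbB hb using fun l => (f l).2.2
  obtain ⟨A, hA, hcount⟩ := hslots k hk b hbB
  choose F hF hF1 hF0 using fun l => exists_linearForm_of_notMem (hA l)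
  refine ⟨∏ l, F l, ?_, ?_, fun j hj => ?_⟩
  · simpa using IsHomogeneous.prod Finset.univ F (fun _ => 1) (fun l _ => hF l)
  · simp [map_prod, hF1]
  · rw [List.prod_ofFn]
    have hforms := prod_mem_pow_card_filter (pointIdeal (p j)) (f := fun l => (f l).1)
      (fun l => j ∈ b l) fun l hl => Ideal.subset_span ⟨(f l).2.1.1, hb l j hl⟩
    have hslot := prod_mem_pow_card_filter (pointIdeal (p j)) (f := F) (fun l => j ∈ A l)
      fun l hl => Ideal.subset_span ⟨hF l, hF0 l _ (Submodule.subset_span ⟨j, hl, rfl⟩)⟩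
    exact Ideal.pow_le_pow_right (hcount j hj) (pow_add (pointIdeal (p j)) _ _ ▸
      Ideal.mul_mem_mul hforms hslot)

theorem linearFormsVanishing_le_span_of_notMem_span {P : Fin N → K} {D : Finset (Fin s)}
    (hD : D.Nonempty)
    (hspan : ∀ b ∈ D, p b ∉ Submodule.span K (insert P (p '' (D.erase b : Set (Fin s))))) :
    linearFormsVanishing P ≤ Submodule.span K
      {ℓ | ℓ ∈ linearFormsVanishing P ∧ ∃ b ∈ D, ∀ j ∈ D.erase b, eval (p j) ℓ = 0} := by
  have hdual : ∀ b ∈ D, ∃ f ∈ linearFormsVanishing P, eval (p b) f = 1 ∧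
      ∀ j ∈ D.erase b, eval (p j) f = 0 := by
    intro b hb
    obtain ⟨f, hf, hf1, hf0⟩ := exists_linearForm_of_notMem (hspan b hb)
    exact ⟨f, mem_linearFormsVanishing.2 ⟨hf, hf0 _ (Submodule.subset_span (Set.mem_insert _ _))⟩,
      hf1, fun j hj => hf0 _ (Submodule.subset_span (.inr ⟨j, hj, rfl⟩))⟩
  choose! φ hφ hφ1 hφ0 using hdual
  intro ℓ hℓ
  have hinterp : ∑ b ∈ D, eval (p b) ℓ • φ b ∈ linearFormsVanishing P :=
    Submodule.sum_mem _ fun b hb => Submodule.smul_mem _ _ (hφ b hb)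
  rw [← sub_add_cancel ℓ (∑ b ∈ D, eval (p b) ℓ • φ b)]
  refine Submodule.add_mem _ (Submodule.subset_span ?_) (Submodule.sum_mem _ fun b hb =>
    Submodule.smul_mem _ _ (Submodule.subset_span ⟨hφ b hb, b, hb, hφ0 b hb⟩))
  obtain ⟨b, hb⟩ := hD
  refine ⟨Submodule.sub_mem _ hℓ hinterp, b, hb, fun j hj => ?_⟩
  have hjD := Finset.mem_of_mem_erase hj
  rw [map_sub, map_sum, Finset.sum_eq_single j, smul_eval, hφ1 j hjD, mul_one, sub_self]
  · intro c hc hcj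
    rw [smul_eval, hφ0 c hc j (Finset.mem_erase.2 ⟨hcj.symm, hjD⟩), mul_zero]
  · exact absurd hjD

end ProductsOfLinearForms

section Scheduling

-- McNaughton's wrap-around rule: lay the items end to end, `i` being repeated `d i` times, and put
-- the `x`-th one into the slot `x % n`.
theorem exists_schedule {s g n : ℕ} (d : Fin s → ℕ) (hd : ∀ i, d i ≤ n)
    (hsum : ∑ i, d i ≤ g * n) :
    ∃ A : Fin n → Finset (Fin s), (∀ l, (A l).card ≤ g) ∧ (∀ l, ∀ i ∈ A l, 0 < d i) ∧
      ∀ i, d i ≤ (Finset.univ.filter fun l => i ∈ A l).card := by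
  let e : (i : Fin s) × Fin (d i) ≃ Fin (∑ i, d i) := finSigmaFinEquiv
  let slot (l : Fin n) : Finset (Fin (∑ i, d i)) := Finset.univ.filter fun x => x.1 % n = l
  refine ⟨fun l => (slot l).image fun x => (e.symm x).1, fun l => ?_, fun l i hi => ?_, fun i => ?_⟩
  · refine Finset.card_image_le.trans ((Finset.card_le_card_of_injOn (t := Finset.range g)
      (fun x => x.1 / n) (fun x _ => ?_) fun x hx y hy hxy => ?_).trans (Finset.card_range g).le)
    · exact Finset.mem_coe.2 (Finset.mem_range.2
        (Nat.div_lt_of_lt_mul (x.2.trans_le (hsum.trans_eq (mul_comm g n)))))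
    · have hmod : x.1 % n = y.1 % n :=
        (Finset.mem_filter.1 hx).2.trans (Finset.mem_filter.1 hy).2.symm
      rw [Fin.ext_iff, ← Nat.div_add_mod x.1 n, ← Nat.div_add_mod y.1 n, hmod]
      exact congrArg (fun q => n * q + y.1 % n) hxy
  · obtain ⟨x, -, rfl⟩ := Finset.mem_image.1 hi
    exact (e.symm x).2.pos
  · have hn (y : Fin (d i)) : 0 < n := y.pos.trans_le (hd i)
    rw [← Fintype.card_fin (d i), ← Finset.card_univ]
    refine Finset.card_le_card_of_injOn (fun y => ⟨(e ⟨i, y⟩).1 % n, Nat.mod_lt _ (hn y)⟩)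
      (fun y _ => ?_) fun y _ z _ hyz => ?_
    · simp only [Finset.coe_filter, Finset.mem_univ, true_and, Set.mem_ofPred_eq, Finset.mem_image]
      exact ⟨e ⟨i, y⟩, by simp [slot], by simp⟩
    · have hmod : (e ⟨i, y⟩).1 ≡ (e ⟨i, z⟩).1 [MOD n] := congrArg Fin.val hyz
      simp only [e, finSigmaFinEquiv_apply] at hmod
      exact Fin.ext (Nat.ModEq.eq_of_lt_of_lt (Nat.ModEq.add_left_cancel' _ hmod)
        (y.2.trans_le (hd i)) (z.2.trans_le (hd i)))

theorem exists_complementary_schedule {s g k m t : ℕ} {C : Finset (Fin s)}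
    {b : Fin k → Finset (Fin s)} (hb : ∀ l, b l ⊆ C ∧ (b l).card + 1 = g) (hk : k < m)
    (hmt : 2 * m ≤ t + 1) (hC : (C.card + 1) * m ≤ g * t + 1) :
    ∃ A : Fin (t - k) → Finset (Fin s), (∀ l, A l ⊆ C ∧ (A l).card ≤ g) ∧
      ∀ j ∈ C, m ≤ (Finset.univ.filter fun l => j ∈ b l).card +
        (Finset.univ.filter fun l => j ∈ A l).card := by
  let count (j : Fin s) : ℕ := (Finset.univ.filter fun l => j ∈ b l).card
  have hcount_le : ∀ j, count j ≤ k := fun j =>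
    (Finset.card_le_univ _).trans_eq (Fintype.card_fin k)
  have hcount : ∑ j ∈ C, count j + k = g * k := by
    have hfilter : ∀ l, (C.filter fun j => j ∈ b l).card + 1 = g := fun l => by
      rw [Finset.filter_mem_eq_inter, Finset.inter_eq_right.2 (hb l).1, (hb l).2]
    calc ∑ j ∈ C, count j + k = ∑ l : Fin k, ((C.filter fun j => j ∈ b l).card + 1) := by
          rw [Finset.sum_add_distrib, Finset.sum_const, Finset.card_univ, Fintype.card_fin,
            smul_eq_mul, mul_one]
          exact congrArg (· + k)
            (Finset.sum_card_bipartiteAbove_eq_sum_card_bipartiteBelow fun j l => j ∈ b l)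
      _ = g * k := by
          rw [Finset.sum_congr rfl fun l _ => hfilter l, Finset.sum_const, Finset.card_univ,
            Fintype.card_fin, smul_eq_mul, mul_comm]
  have hdeficit : ∑ j, (if j ∈ C then m - count j else 0) ≤ g * (t - k) := by
    have htotal : ∑ j ∈ C, (m - count j) + ∑ j ∈ C, count j = C.card * m := by
      rw [← Finset.sum_add_distrib, ← smul_eq_mul, ← Finset.sum_const]
      exact Finset.sum_congr rfl fun j _ => Nat.sub_add_cancel ((hcount_le j).trans hk.le)
    rw [Finset.sum_ite_mem, Finset.univ_inter, Nat.mul_sub]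
    rw [add_mul] at hC
    omega
  obtain ⟨A, hAcard, hApos, hA⟩ := exists_schedule _ (fun j => by split_ifs <;> omega) hdeficit
  refine ⟨A, fun l => ⟨fun j hj => ?_, hAcard l⟩, fun j hj => ?_⟩
  · by_contra hjC
    simpa [hjC] using hApos l j hj
  · have := hA j
    rw [if_pos hj] at this
    exact Nat.sub_le_iff_le_add'.1 this

theorem exists_assignment {α : Type*} [DecidableEq α] {C E : Finset α} {c : α} (hc : c ∈ C) {g : ℕ}
    (hg : 0 < g) (hgC : g < C.card) (hCE : C.card + E.card ≤ 4) :
    ∃ ψ : α → α, (∀ e ∈ E, ψ e ∈ C) ∧ (2 ≤ g → ∀ e, ψ e = c) ∧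
      ∀ A : Finset α, A.card ≤ g → (E.filter fun e => ψ e ∈ A).card ≤ 1 := by
  rcases Nat.lt_or_ge g 2 with hg2 | hg2
  · have : Nonempty α := ⟨c⟩
    obtain ⟨ψ, hψ, hinj⟩ := E.finite_toSet.exists_injOn_of_encard_le (t := (C : Set α)) (by
      rw [Set.encard_coe_eq_coe_finsetCard, Set.encard_coe_eq_coe_finsetCard]
      exact_mod_cast (by omega : E.card ≤ C.card))
    refine ⟨ψ, hψ, fun h => by omega, fun A hA => le_trans ?_ (hA.trans (by omega : g ≤ 1))⟩
    exact Finset.card_le_card_of_injOn ψ (fun e he => (Finset.mem_filter.1 he).2)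
      (hinj.mono (Finset.coe_subset.2 (Finset.filter_subset _ _)))
  · exact ⟨fun _ => c, fun _ _ => hc, fun _ _ => rfl,
      fun A _ => (Finset.card_filter_le _ _).trans (by omega)⟩

theorem exists_complementary_slots {s g k m t : ℕ} {C inside outside : Finset (Fin s)} {c : Fin s}
    (hc : c ∈ C) (hg : 0 < g) (hCg : C.card = g + 1) (hC : C ⊆ inside)
    (hcard : inside.card + outside.card ≤ 4) (hk : k < m) (hmt : 2 * m ≤ t + 1)
    (hinside : (inside.card + 1) * m ≤ g * t + 1) {b : Fin k → Finset (Fin s)}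
    (hb : ∀ l, ∃ x ∈ C.erase c, (C.erase c).erase x = b l) :
    ∃ A F : Fin (t - k) → Finset (Fin s),
      (∀ l, A l ⊆ inside ∧ (A l).card ≤ g ∧ F l ⊆ outside ∧ (F l).card ≤ 1) ∧
      ∀ j ∈ inside ∪ outside, m ≤ (Finset.univ.filter fun l => j ∈ b l).card +
        (Finset.univ.filter fun l => j ∈ A l ∪ F l).card := by
  obtain ⟨ψ, hψ, hψc, hψcard⟩ := exists_assignment (hC hc) hg
    (Nat.lt_of_succ_le (hCg.ge.trans (Finset.card_le_card hC))) hcard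
  have hbcard : ∀ l, (b l).card + 1 = g := fun l => by
    obtain ⟨x, hx, hbl⟩ := hb l
    rw [← hbl, Finset.card_erase_add_one hx, Finset.card_erase_of_mem hc, hCg, Nat.add_sub_cancel]
  have hbsub : ∀ l, b l ⊆ C.erase c := fun l => by
    obtain ⟨x, -, hbl⟩ := hb l
    exact hbl ▸ Finset.erase_subset _ _
  have hψb : ∀ l e, ψ e ∉ b l := fun l e he => by
    have hg2 : 2 ≤ g := by
      have := Finset.card_pos.2 ⟨_, he⟩
      have := hbcard l
      omega
    exact Finset.ne_of_mem_erase (hbsub l he) (hψc hg2 e)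
  obtain ⟨A, hA, hAcount⟩ := exists_complementary_schedule
    (fun l => ⟨((hbsub l).trans (Finset.erase_subset _ _)).trans hC, hbcard l⟩) hk hmt hinside
  refine ⟨A, fun l => outside.filter fun e => ψ e ∈ A l, fun l => ⟨(hA l).1, (hA l).2,
    Finset.filter_subset _ _, hψcard _ (hA l).2⟩, fun j hj => ?_⟩
  rcases Finset.mem_union.1 hj with hj | hj
  · exact (hAcount j hj).trans (Nat.add_le_add_left (Finset.card_le_card
      (Finset.monotone_filter_right _ fun l _ hl => Finset.mem_union_left _ hl)) _)
  · have hcount := hAcount (ψ j) (hψ j hj)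
    rw [Finset.filter_false_of_mem fun l _ => hψb l j, Finset.card_empty, zero_add] at hcount
    exact (hcount.trans (Finset.card_le_card (Finset.monotone_filter_right _ fun l _ hl =>
      Finset.mem_union_right _ (Finset.mem_filter.2 ⟨hj, hl⟩)))).trans (Nat.le_add_left _ _)

end Scheduling

section Circuits

variable {K : Type} [Field K] {N s : ℕ} {p : Fin s → Fin N → K} {i : Fin s} {C : Finset (Fin s)}

/-- `C` is a set of smallest size among the sets of further vectors of the family whose span
contains `p i`; equivalently, `insert i C` is a smallest circuit through `i` in the linear matroid
of `p`. -/
structure IsSmallestSpanning (p : Fin s → Fin N → K) (i : Fin s) (C : Finset (Fin s)) : Prop where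
  notMem : i ∉ C
  mem_span : p i ∈ Submodule.span K (p '' (C : Set (Fin s)))
  card_le : ∀ A : Finset (Fin s), i ∉ A → p i ∈ Submodule.span K (p '' (A : Set (Fin s))) →
    C.card ≤ A.card

theorem exists_isSmallestSpanning (hi : p i ∈ Submodule.span K (p '' {i}ᶜ)) :
    ∃ C, IsSmallestSpanning p i C := by
  classical
  let spanning := Finset.univ.filter fun A : Finset (Fin s) =>
    i ∉ A ∧ p i ∈ Submodule.span K (p '' (A : Set (Fin s)))
  have hne : spanning.Nonempty := ⟨{i}ᶜ, by simpa [spanning] using hi⟩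
  obtain ⟨C, hC, hmin⟩ := spanning.exists_min_image Finset.card hne
  obtain ⟨-, hiC, hspan⟩ := Finset.mem_filter.1 hC
  exact ⟨C, hiC, hspan, fun A hiA hA => hmin A (Finset.mem_filter.2 ⟨Finset.mem_univ _, hiA, hA⟩)⟩

theorem IsSmallestSpanning.two_le_card (hC : IsSmallestSpanning p i C) (hp : ProjDistinct p) :
    2 ≤ C.card := by
  by_contra! hlt
  have : Nonempty (Fin s) := ⟨i⟩
  obtain ⟨e, he⟩ := Finset.card_le_one_iff_subset_singleton.1 (Nat.le_of_lt_succ hlt)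
  rcases Finset.subset_singleton_iff.1 he with rfl | rfl
  · exact hp.1 i (by simpa using hC.mem_span)
  · obtain ⟨a, ha⟩ := Submodule.mem_span_singleton.1 (by simpa using hC.mem_span)
    exact hp.2 i e (by simpa using hC.notMem) a ha.symm

theorem IsSmallestSpanning.notMem_span_insert_erase (hC : IsSmallestSpanning p i C) {c b : Fin s}
    (hc : c ∈ C) (hb : b ∈ C.erase c) :
    p b ∉ Submodule.span K (insert (p i) (p '' ((C.erase c).erase b : Set (Fin s)))) := by
  intro hmem
  have hproper : ∀ x ∈ C, p i ∉ Submodule.span K (p '' (C.erase x : Set (Fin s))) := fun x hx h =>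
    (Finset.card_erase_lt_of_mem hx).not_ge
      (hC.card_le _ (fun h => hC.notMem (Finset.mem_of_mem_erase h)) h)
  have hbC := Finset.mem_of_mem_erase hb
  by_cases hbspan : p b ∈ Submodule.span K (p '' ((C.erase c).erase b : Set (Fin s)))
  · refine hproper b hbC (Submodule.span_le.2 ?_ hC.mem_span)
    rintro _ ⟨x, hx, rfl⟩
    rcases eq_or_ne x b with rfl | hxb
    · rw [Finset.erase_right_comm] at hbspan
      exact Submodule.span_mono (Set.image_mono (Finset.erase_subset _ _)) hbspan
    · exact Submodule.subset_span ⟨x, Finset.mem_erase.2 ⟨hxb, hx⟩, rfl⟩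
  · have hexchange := mem_span_insert_exchange hmem hbspan
    rw [← Set.image_insert_eq, ← Finset.coe_insert, Finset.insert_erase hb] at hexchange
    exact hproper c hc hexchange

theorem notMem_span_image_union {W : Submodule K (Fin N → K)} {A F : Finset (Fin s)}
    (hi : p i ∈ W) (hA : ∀ x ∈ A, p x ∈ W) (hF : ∀ e ∈ F, p e ∉ W) (hcard : F.card ≤ 1)
    (hiA : p i ∉ Submodule.span K (p '' (A : Set (Fin s)))) :
    p i ∉ Submodule.span K (p '' ((A ∪ F : Finset (Fin s)) : Set (Fin s))) := by
  have : Nonempty (Fin s) := ⟨i⟩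
  obtain ⟨e, he⟩ := Finset.card_le_one_iff_subset_singleton.1 hcard
  rcases Finset.subset_singleton_iff.1 he with rfl | rfl
  · rwa [Finset.union_empty]
  · rw [Finset.coe_union, Finset.coe_singleton, Set.union_singleton, Set.image_insert_eq]
    intro hmem
    refine hF e (Finset.mem_singleton_self e)
      (Submodule.span_le.2 ?_ (mem_span_insert_exchange hmem hiA))
    rintro _ (rfl | ⟨x, hx, rfl⟩)
    exacts [hi, hA x hx]

theorem IsSmallestSpanning.linearFormsVanishing_le_span (hC : IsSmallestSpanning p i C)
    {c : Fin s} (hc : c ∈ C) (hcard : 2 ≤ C.card) :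
    linearFormsVanishing (p i) ≤ Submodule.span K {ℓ | ℓ ∈ linearFormsVanishing (p i) ∧
      ∃ b ∈ (C.erase c).erase '' (C.erase c : Set (Fin s)), ∀ j ∈ b, eval (p j) ℓ = 0} := by
  have hne : (C.erase c).Nonempty := by
    rw [← Finset.card_pos, Finset.card_erase_of_mem hc]
    omega
  simpa only [Set.exists_mem_image, Finset.mem_coe] using
    linearFormsVanishing_le_span_of_notMem_span hne fun b hb => hC.notMem_span_insert_erase hc hb

theorem onLinearSubspace_of_card_le {g : ℕ} (hC : C.card ≤ g + 1) {Q : Finset (Fin s)}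
    (hQ : ∀ j ∈ Q, p j ∈ Submodule.span K (p '' (C : Set (Fin s)))) : OnLinearSubspace p Q g := by
  classical
  refine ⟨_, ?_, hQ⟩
  have hrank := finrank_span_finset_le_card (R := K) (C.image p)
  rw [Finset.coe_image] at hrank
  exact hrank.trans (Finset.card_image_le.trans hC)

theorem separatesAt_of_isSmallestSpanning (hs : s ≤ 5) (hp : ProjDistinct p) {m t : ℕ}
    (hspan : ∀ j, 0 < j → ∀ Q, OnLinearSubspace p Q j → Q.card * m ≤ j * t + 1)
    (hmt : 2 * m ≤ t + 1) (hC : IsSmallestSpanning p i C) :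
    SeparatesAt p (fun _ => m) t i := by
  classical
  set W := Submodule.span K (p '' (C : Set (Fin s)))
  set inside := (Finset.univ.erase i).filter fun x => p x ∈ W with hinside
  set outside := (Finset.univ.erase i).filter fun x => p x ∉ W
  have hcard := hC.two_le_card hp
  obtain ⟨g, hg⟩ : ∃ g, C.card = g + 1 := ⟨C.card - 1, by omega⟩
  obtain ⟨c, hc⟩ : C.Nonempty := by rw [← Finset.card_pos]; omega
  have hCin : C ⊆ inside := fun x hx => Finset.mem_filter.2 ⟨Finset.mem_erase.2
    ⟨fun h => hC.notMem (h ▸ hx), Finset.mem_univ x⟩, Submodule.subset_span ⟨x, hx, rfl⟩⟩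
  have hpartition : inside.card + outside.card ≤ 4 := by
    rw [Finset.card_filter_add_card_filter_not, Finset.card_erase_of_mem (Finset.mem_univ i),
      Finset.card_univ, Fintype.card_fin]
    omega
  have hbound : (inside.card + 1) * m ≤ g * t + 1 := by
    have hi : i ∉ inside := by simp [hinside]
    rw [← Finset.card_insert_of_notMem hi]
    refine hspan g (by omega) _ (onLinearSubspace_of_card_le hg.le fun x hx => ?_)
    rcases Finset.mem_insert.1 hx with rfl | hx
    exacts [hC.mem_span, (Finset.mem_filter.1 hx).2]
  refine separatesAt_of_exists_slots (hp.1 i) (by omega) _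
    (hC.linearFormsVanishing_le_span hc hcard) fun k hk b hb => ?_
  obtain ⟨A, F, hAF, hcount⟩ :=
    exists_complementary_slots hc (by omega) hg hCin hpartition hk hmt hbound hb
  refine ⟨fun l => A l ∪ F l, fun l => ?_, fun j hj => hcount j ?_⟩
  · obtain ⟨hA, hAcard, hF, hFcard⟩ := hAF l
    refine notMem_span_image_union hC.mem_span (fun x hx => (Finset.mem_filter.1 (hA hx)).2)
      (fun e he => (Finset.mem_filter.1 (hF he)).2) hFcard fun hmem => ?_
    have := hC.card_le (A l) (fun h => by simpa [hinside] using hA h) hmem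
    omega
  · rw [Finset.filter_union_filter_not_eq]
    exact Finset.mem_erase.2 ⟨hj, Finset.mem_univ j⟩

theorem two_mul_le_of_onLinearSubspace {m t : ℕ}
    (hspan : ∀ j, 0 < j → ∀ Q, OnLinearSubspace p Q j → Q.card * m ≤ j * t + 1) {j : Fin s}
    (hij : i ≠ j) : 2 * m ≤ t + 1 := by
  have hcard := Finset.card_pair hij
  have hline := hspan 1 one_pos {i, j} (onLinearSubspace_of_card_le hcard.le
    fun x hx => Submodule.subset_span ⟨x, hx, rfl⟩)
  rwa [hcard, one_mul] at hline

theorem separatesAt_of_onLinearSubspace (hs : s ≤ 5) (hp : ProjDistinct p) {m t : ℕ}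
    (hspan : ∀ j, 0 < j → ∀ Q, OnLinearSubspace p Q j → Q.card * m ≤ j * t + 1) (i : Fin s) :
    m ≤ t + 1 ∧ SeparatesAt p (fun _ => m) t i := by
  have hmt : m ≤ t + 1 := by
    have hpoint := hspan 1 one_pos {i} (onLinearSubspace_of_card_le (C := {i}) (by simp)
      fun x hx => Submodule.subset_span ⟨x, hx, rfl⟩)
    simpa only [Finset.card_singleton, one_mul] using hpoint
  refine ⟨hmt, ?_⟩
  by_cases hi : p i ∈ Submodule.span K (p '' {i}ᶜ)
  · obtain ⟨C, hC⟩ := exists_isSmallestSpanning hi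
    obtain ⟨j, hj⟩ : C.Nonempty := Finset.card_pos.1 (two_pos.trans_le (hC.two_le_card hp))
    exact separatesAt_of_isSmallestSpanning hs hp hspan
      (two_mul_le_of_onLinearSubspace hspan fun h : i = j => hC.notMem (h ▸ hj)) hC
  · refine separatesAt_of_exists_slots (hp.1 i) hmt {∅}
      (fun ℓ hℓ => Submodule.subset_span ⟨hℓ, ∅, rfl, by simp⟩) fun k hk b _ =>
      ⟨fun _ => {i}ᶜ, fun _ => by simpa using hi, fun j hj => ?_⟩
    have htwo := two_mul_le_of_onLinearSubspace hspan hj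
    calc m ≤ t - k := by omega
      _ = (Finset.univ.filter fun _ : Fin (t - k) => j ∈ ({i}ᶜ : Finset (Fin s))).card := by
          simp [hj]
      _ ≤ _ := Nat.le_add_left _ _

end Circuits

section Regularity

variable {K : Type} [Field K] {s : ℕ}

theorem ProjDistinct.subsingleton {p : Fin s → Fin 1 → K} (hp : ProjDistinct p) :
    Subsingleton (Fin s) := by
  refine ⟨fun i j => ?_⟩
  by_contra hij
  have hj : p j 0 ≠ 0 := fun h => hp.1 j (funext fun x => by rw [Fin.fin_one_eq_zero x, h]; rfl)
  refine hp.2 i j hij (p i 0 / p j 0) (funext fun x => ?_)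
  rw [Fin.fin_one_eq_zero x, Pi.smul_apply, smul_eq_mul, div_mul_cancel₀ _ hj]

theorem hilbFn_fatIdeal_zero {n : ℕ} (p : Fin s → Fin (n + 1) → K) {m : Fin s → ℕ} {i : Fin s}
    (hm : m i ≠ 0) : hilbFn K (fatIdeal p m) 0 = 1 := by
  have hbot : homogeneousSubmodule (Fin (n + 1)) K 0 ⊓ (fatIdeal p m).restrictScalars K = ⊥ := by
    refine eq_bot_iff.2 fun f hf => ?_
    have heval := eval_eq_zero_of_mem_pointIdeal_pow hm ((Submodule.mem_iInf _).1 hf.2 i)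
    obtain ⟨c, rfl⟩ := Submodule.mem_one.1
      (homogeneousSubmodule_zero (σ := Fin (n + 1)) (R := K) ▸ hf.1)
    rw [algebraMap_eq, eval_C] at heval
    rw [heval, map_zero]
    exact zero_mem _
  rw [hilbFn, gradedDim, hbot, finrank_bot, finrank_homogeneousSubmodule]
  simp

theorem regFat_eq_zero {p : Fin s → Fin (0 + 1) → K} (hp : ProjDistinct p) {m : Fin s → ℕ}
    (hm : ∀ i, m i ≠ 0) : regFat K p m = 0 := by
  refine Nat.sInf_eq_zero.2 (.inl (show hilbFn K (fatIdeal p m) 0 = fatMult 0 m from ?_))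
  have hmult : fatMult 0 m = s := by simp [fatMult]
  rw [hmult]
  have hs : s ≤ 1 := Fin.subsingleton_iff_le_one.1 hp.subsingleton
  interval_cases s
  · have htop : fatIdeal p m = ⊤ := iInf_of_empty _
    rw [hilbFn, gradedDim, htop, Submodule.restrictScalars_top, inf_top_eq, Nat.sub_self]
  · exact hilbFn_fatIdeal_zero p (hm 0)

end Regularity

theorem stmt15_general {K : Type} [Field K] [Infinite K] {n s : ℕ} (hs : s ≤ 5)
    (p : Fin s → Fin (n + 1) → K) (hdist : ProjDistinct p) (m : ℕ) (hm : 0 < m) :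
    regFat K p (fun _ => m) = segreBound n p (fun _ => m) := by
  rcases Nat.eq_zero_or_pos n with rfl | hn
  · rw [regFat_eq_zero hdist fun _ => hm.ne']
    simp [segreBound]
  have hreg : ∀ t, t ∈ {t | hilbFn K (fatIdeal p fun _ => m) t = fatMult n fun _ : Fin s => m} ↔
      ∀ i, m ≤ t + 1 ∧ SeparatesAt p (fun _ => m) t i :=
    fun t => hilbFn_fatIdeal_eq_fatMult_iff hn hdist.1 _
  have hupper := (hreg (segreBound n p fun _ => m)).2 <|
    separatesAt_of_onLinearSubspace hs hdist fun j hj Q hQ => by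
      simpa using (segreBound_le_iff hn p fun _ => m).1 le_rfl j hj Q hQ
  refine le_antisymm (Nat.sInf_le hupper) (segreBound_le_of_separatesAt hn hs hdist hm ?_)
  exact (hreg _).1 (Nat.sInf_mem ⟨_, hupper⟩)

/-- Lemma 2.9 (Thien–Sinh): the Segre bound is attained for at most five
equimultiple fat points in `ℙⁿ`. -/
theorem stmt15 {K : Type} [Field K] [IsAlgClosed K] {n s : ℕ} (hs : s ≤ 5)
    (p : Fin s → Fin (n + 1) → K) (hdist : ProjDistinct p)
    (m : ℕ) (hm : 0 < m) :
    regFat K p (fun _ => m) = segreBound n p (fun _ => m) :=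
  stmt15_general hs p hdist m hm
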